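/- Let M be a countable transitive model of ZF⁻ in which every set is countable, let ℙ be the forcing whose conditions are partial functions from ω to 2 in M ordered by reverse inclusion, and let ℚ be the finite support product of ω-many copies of ℙ. Then ℚ does not satisfy the forcing theorem over 𝕄 = ⟨M, 𝒞⟩: if it did, one could define over M a truth predicate for first-order truth in M, contradicting Tarski's theorem on the undefinability of truth. -/

import Mathlib

noncomputable section

namespace CF

attribute [local instance] Classical.propDecidable

/-! ### First-order formulas of the language of set theory -/

/-- First-order `∈`-formulas with variables indexed by `ℕ`. -/
inductive EFormula : Type
  | mem : ℕ → ℕ → EFormula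
  | eq : ℕ → ℕ → EFormula
  | not : EFormula → EFormula
  | or : EFormula → EFormula → EFormula
  | ex : ℕ → EFormula → EFormula

/-- Satisfaction of an `∈`-formula in the structure `⟨D, ∈⟩` under assignment `v`. -/
def EFormula.Sat (D : Set ZFSet) (v : ℕ → ZFSet) : EFormula → Prop
  | .mem i j => v i ∈ v j
  | .eq i j => v i = v j
  | .not φ => ¬ EFormula.Sat D v φ
  | .or φ ψ => EFormula.Sat D v φ ∨ EFormula.Sat D v ψ
  | .ex i φ => ∃ x ∈ D, EFormula.Sat D (Function.update v i x) φ

/-- All variables occurring in the formula are `< m`. -/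
def EFormula.VarsLt (m : ℕ) : EFormula → Prop
  | .mem i j => i < m ∧ j < m
  | .eq i j => i < m ∧ j < m
  | .not φ => EFormula.VarsLt m φ
  | .or φ ψ => EFormula.VarsLt m φ ∧ EFormula.VarsLt m ψ
  | .ex i φ => i < m ∧ EFormula.VarsLt m φ

/-- First-order formulas of the two-sorted language of `GB⁻`: set variables indexed by `ℕ`,
class parameters indexed by `ℕ`, and only set quantifiers. -/
inductive GBFormula : Type
  | mem : ℕ → ℕ → GBFormula
  | eq : ℕ → ℕ → GBFormula
  | cls : ℕ → ℕ → GBFormula    -- `vᵢ ∈ C_j`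
  | not : GBFormula → GBFormula
  | or : GBFormula → GBFormula → GBFormula
  | ex : ℕ → GBFormula → GBFormula

/-- Satisfaction of a `GBFormula` with set quantifiers ranging over `Mset`,
class parameters `Cs` and set assignment `v`. -/
def GBFormula.Sat (Mset : Set ZFSet) (Cs : ℕ → Set ZFSet) (v : ℕ → ZFSet) : GBFormula → Prop
  | .mem i j => v i ∈ v j
  | .eq i j => v i = v j
  | .cls i j => v i ∈ Cs j
  | .not φ => ¬ GBFormula.Sat Mset Cs v φ
  | .or φ ψ => GBFormula.Sat Mset Cs v φ ∨ GBFormula.Sat Mset Cs v ψ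
  | .ex i φ => ∃ x ∈ Mset, GBFormula.Sat Mset Cs (Function.update v i x) φ

/-! ### Countable transitive models of GB⁻ -/

/-- A countable transitive second-order model `𝕄 = ⟨M, 𝒞⟩` of `GB⁻`:
`M` is transitive and countable, classes are subsets of `M`, sets are classes, and the axioms
of `GB⁻` hold (extensionality and foundation are automatic for `ZFSet`; the set axioms of `ZF⁻`
with separation and collection allowing class parameters, together with first-order class
comprehension, are listed). -/
structure GBModel.{u_1} where
  M : Set ZFSet.{u_1}
  Cls : Set (Set ZFSet)
  countable_M : M.Countable
  countable_Cls : Cls.Countable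
  transitive : ∀ x ∈ M, ∀ y : ZFSet, y ∈ x → y ∈ M
  sets_are_classes : ∀ x ∈ M, x.toSet ∈ Cls
  classes_sub : ∀ C ∈ Cls, C ⊆ M
  empty_mem : (∅ : ZFSet) ∈ M
  pair_mem : ∀ x ∈ M, ∀ y ∈ M, ({x, y} : ZFSet) ∈ M
  sUnion_mem : ∀ x ∈ M, (ZFSet.sUnion x : ZFSet) ∈ M
  omega_mem : ZFSet.omega ∈ M
  comprehension : ∀ (φ : GBFormula) (v : ℕ → ZFSet) (Cs : ℕ → Set ZFSet),
    (∀ n, v n ∈ M) → (∀ n, Cs n ∈ Cls) →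
    {x : ZFSet | x ∈ M ∧ GBFormula.Sat M Cs (Function.update v 0 x) φ} ∈ Cls
  separation : ∀ C ∈ Cls, ∀ a ∈ M, ∃ b ∈ M, ∀ x : ZFSet, x ∈ b ↔ x ∈ a ∧ x ∈ C
  collection : ∀ C ∈ Cls, ∀ a ∈ M,
    (∀ x : ZFSet, x ∈ a → ∃ y ∈ M, x.pair y ∈ C) →
    ∃ b ∈ M, ∀ x : ZFSet, x ∈ a → ∃ y : ZFSet, y ∈ b ∧ x.pair y ∈ C

/-- A notion of class forcing `ℙ = ⟨P, ≤_ℙ⟩` for `𝕄`: a partial order (with maximal element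
`𝟙_ℙ`) whose domain and order relation are classes of `𝕄`. -/
structure ClassForcing (𝕄 : GBModel) where
  P : Set ZFSet
  le : ZFSet → ZFSet → Prop
  one : ZFSet
  one_mem : one ∈ P
  le_one : ∀ p ∈ P, le p one
  le_refl : ∀ p ∈ P, le p p
  le_trans : ∀ p q r : ZFSet, le p q → le q r → le p r
  P_cls : P ∈ 𝕄.Cls
  le_cls : {x : ZFSet | ∃ p ∈ P, ∃ q ∈ P, le p q ∧ x = p.pair q} ∈ 𝕄.Cls

/-! ### Names and their evaluation -/

/-- Auxiliary rank-bounded version of `IsName`. -/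
def IsNameAux (S : Set ZFSet) (o : Ordinal) (σ : ZFSet) : Prop :=
  ∀ x ∈ σ.toSet, ∃ τ p : ZFSet, x = τ.pair p ∧ p ∈ S ∧
    ∃ _h : τ.rank < o, IsNameAux S τ.rank τ
termination_by o

/-- `σ` is a `ℙ`-name (for the forcing with conditions `S`): every element of `σ` is a pair
`⟨τ, p⟩` with `τ` a `ℙ`-name and `p ∈ S`. -/
def IsName (S : Set ZFSet) (σ : ZFSet) : Prop := IsNameAux S σ.rank σ

/-- Image of a ZFSet under an arbitrary function (using choice for definability). -/
def zimage (f : ZFSet → ZFSet) (x : ZFSet) : ZFSet :=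
  @ZFSet.image f (Classical.allZFSetDefinable _) x

/-- Auxiliary rank-bounded version of the evaluation `σ^G` of a name by a filter. -/
def nameEvalAux (G : Set ZFSet) (o : Ordinal) (σ : ZFSet) : ZFSet :=
  zimage (fun τ => if h : τ.rank < o then nameEvalAux G τ.rank τ else ∅)
    (ZFSet.sep (fun τ => ∃ p, p ∈ G ∧ τ.pair p ∈ σ) (ZFSet.sUnion (ZFSet.sUnion σ)))
termination_by o
decreasing_by exact h

/-- The evaluation `σ^G = {τ^G | ∃ p ∈ G, ⟨τ, p⟩ ∈ σ}` of a name `σ` by a filter `G`. -/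
def nameEval (G : Set ZFSet) (σ : ZFSet) : ZFSet := nameEvalAux G σ.rank σ

/-- Auxiliary rank-bounded version of `nameTC`. -/
def nameTCAux (o : Ordinal) (σ : ZFSet) : Set ZFSet :=
  {x | ∃ τ p : ZFSet, τ.pair p ∈ σ ∧ (x = p ∨ ∃ _h : τ.rank < o, x ∈ nameTCAux τ.rank τ)}
termination_by o

/-- The set `tc(σ) = ⋃ {{p} ∪ tc(τ) | ⟨τ,p⟩ ∈ σ}` of conditions appearing in the transitive
closure of the name `σ`. -/
def nameTC (σ : ZFSet) : Set ZFSet := nameTCAux σ.rank σ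

/-! ### Filters, genericity, generic extensions -/

/-- `G` is a filter on the partial order with domain `S` and ordering `le`. -/
def IsFilterOn (S : Set ZFSet) (le : ZFSet → ZFSet → Prop) (G : Set ZFSet) : Prop :=
  G ⊆ S ∧ G.Nonempty ∧ (∀ p ∈ G, ∀ q ∈ S, le p q → q ∈ G) ∧
    ∀ p ∈ G, ∀ q ∈ G, ∃ r ∈ G, le r p ∧ le r q

/-- `D` is a dense subclass of the partial order `⟨S, le⟩`. -/
def DenseIn (S : Set ZFSet) (le : ZFSet → ZFSet → Prop) (D : Set ZFSet) : Prop :=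
  D ⊆ S ∧ ∀ p ∈ S, ∃ q ∈ D, le q p

/-- `G` is a generic filter on `⟨S, le⟩` over `𝕄`: a filter meeting every dense subclass
of `⟨S, le⟩` lying in `𝒞`. -/
def IsGeneric (𝕄 : GBModel) (S : Set ZFSet) (le : ZFSet → ZFSet → Prop) (G : Set ZFSet) : Prop :=
  IsFilterOn S le G ∧ ∀ D ∈ 𝕄.Cls, DenseIn S le D → (G ∩ D).Nonempty

/-- The generic extension `M[G] = {σ^G | σ ∈ M a name for the forcing with domain S}`. -/
def MGen (𝕄 : GBModel) (S : Set ZFSet) (G : Set ZFSet) : Set ZFSet :=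
  {x | ∃ σ : ZFSet, σ ∈ 𝕄.M ∧ IsName S σ ∧ nameEval G σ = x}

/-! ### Compatibility, the set decision property -/

/-- `p` and `q` are compatible in `⟨S, le⟩`. -/
def Compat (S : Set ZFSet) (le : ZFSet → ZFSet → Prop) (p q : ZFSet) : Prop :=
  ∃ r ∈ S, le r p ∧ le r q

/-- `p ≤* q` : every extension of `p` is compatible with `q`. -/
def leStar (S : Set ZFSet) (le : ZFSet → ZFSet → Prop) (p q : ZFSet) : Prop :=
  ∀ r ∈ S, le r p → Compat S le r q

/-- `p` decides the set of conditions `A`: for every `a ∈ A`, either `p ≤* a` or `p ⊥ a`. -/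
def Decides (S : Set ZFSet) (le : ZFSet → ZFSet → Prop) (p A : ZFSet) : Prop :=
  ∀ a : ZFSet, a ∈ A → leStar S le p a ∨ ¬ Compat S le p a

/-- The set decision property: every set of conditions in `M` is decided densely. -/
def SetDecisionProperty (𝕄 : GBModel) (F : ClassForcing 𝕄) : Prop :=
  ∀ p ∈ F.P, ∀ A : ZFSet, A ∈ 𝕄.M → (∀ a : ZFSet, a ∈ A → a ∈ F.P) →
    ∃ q ∈ F.P, F.le q p ∧ Decides F.P F.le q A

/-! ### The forcing theorem -/

/-- Encode a finite list of sets as a single set by iterated Kuratowski pairing. -/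
def listEncode : List ZFSet → ZFSet
  | [] => ∅
  | a :: l => a.pair (listEncode l)

/-- The assignment sending variable `n < m` to `σₙ^G` (and `∅` beyond `m`). -/
def namesAssign (G : Set ZFSet) (m : ℕ) (σs : Fin m → ZFSet) : ℕ → ZFSet :=
  fun n => if h : n < m then nameEval G (σs ⟨n, h⟩) else ∅

/-- `p ⊩_ℙ φ(σ₀, …, σ_{m-1})` : for every generic `G ∋ p`, `M[G] ⊨ φ(σ₀^G, …, σ_{m-1}^G)`. -/
def Forces (𝕄 : GBModel) (F : ClassForcing 𝕄) (φ : EFormula) (m : ℕ) (p : ZFSet)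
    (σs : Fin m → ZFSet) : Prop :=
  ∀ G : Set ZFSet, IsGeneric 𝕄 F.P F.le G → p ∈ G →
    EFormula.Sat (MGen 𝕄 F.P G) (namesAssign G m σs) φ

/-- `ℙ` satisfies the forcing theorem over `𝕄`: for every `∈`-formula `φ(v₀,…,v_{m-1})`,
the forcing relation is a class of `𝕄` (definability lemma) and everything true in a generic
extension is forced by a condition in the generic filter (truth lemma). -/
def SatisfiesForcingTheorem (𝕄 : GBModel) (F : ClassForcing 𝕄) : Prop :=
  ∀ (φ : EFormula) (m : ℕ), EFormula.VarsLt m φ →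
    ({x : ZFSet | ∃ p ∈ F.P, ∃ σs : Fin m → ZFSet,
        (∀ i, σs i ∈ 𝕄.M ∧ IsName F.P (σs i)) ∧
        Forces 𝕄 F φ m p σs ∧
        x = p.pair (listEncode (List.ofFn σs))} ∈ 𝕄.Cls) ∧
    ∀ σs : Fin m → ZFSet, (∀ i, σs i ∈ 𝕄.M ∧ IsName F.P (σs i)) →
      ∀ G : Set ZFSet, IsGeneric 𝕄 F.P F.le G →
        EFormula.Sat (MGen 𝕄 F.P G) (namesAssign G m σs) φ →
        ∃ p ∈ G, Forces 𝕄 F φ m p σs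

/-! ### Complete subforcings, the set reduction property -/

/-- `A` is an antichain of the partial order `⟨S, le⟩`. -/
def IsAntichainIn (S : Set ZFSet) (le : ZFSet → ZFSet → Prop) (A : Set ZFSet) : Prop :=
  A ⊆ S ∧ ∀ p ∈ A, ∀ q ∈ A, p ≠ q → ¬ Compat S le p q

/-- `A` is a maximal antichain of the partial order `⟨S, le⟩`. -/
def IsMaxAntichainIn (S : Set ZFSet) (le : ZFSet → ZFSet → Prop) (A : Set ZFSet) : Prop :=
  IsAntichainIn S le A ∧ ∀ p ∈ S, ∃ a ∈ A, Compat S le p a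

/-- `ℚ ⊲∘ ℙ` : `Q` is a set-sized complete subforcing of `ℙ` (with the induced ordering):
`Q ∈ M`, `Q ⊆ P`, `𝟙 ∈ Q`, and every maximal antichain of `ℚ` in `M` is predense in `ℙ`. -/
def IsCompleteSub (𝕄 : GBModel) (F : ClassForcing 𝕄) (Q : ZFSet) : Prop :=
  Q ∈ 𝕄.M ∧ Q.toSet ⊆ F.P ∧ F.one ∈ Q ∧
    ∀ A : ZFSet, A ∈ 𝕄.M → A.toSet ⊆ Q.toSet → IsMaxAntichainIn Q.toSet F.le A.toSet →
      ∀ p ∈ F.P, ∃ a : ZFSet, a ∈ A ∧ Compat F.P F.le p a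

/-- `ℚ^{∥q}` : the conditions of `Q` compatible with `q` in `ℙ`. -/
def QPar (𝕄 : GBModel) (F : ClassForcing 𝕄) (Q : ZFSet) (q : ZFSet) : Set ZFSet :=
  {r | r ∈ Q ∧ Compat F.P F.le r q}

/-- The property `(*)(A, q, ℚ)`: for every `a ∈ A`, the set of `r ∈ ℚ^{∥q}` such that either
all `s ≤ q, r` satisfy `s ≤* a`, or all `s ≤ q, r` satisfy `s ⊥ a`, is dense in `ℚ^{∥q}`. -/
def StarProp (𝕄 : GBModel) (F : ClassForcing 𝕄) (A q Q : ZFSet) : Prop :=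
  ∀ a : ZFSet, a ∈ A → ∀ r₀ ∈ QPar 𝕄 F Q q, ∃ r₁ ∈ QPar 𝕄 F Q q, F.le r₁ r₀ ∧
    ((∀ s ∈ F.P, F.le s q → F.le s r₁ → leStar F.P F.le s a) ∨
      (∀ s ∈ F.P, F.le s q → F.le s r₁ → ¬ Compat F.P F.le s a))

/-- The set reduction property. -/
def SetReductionProperty (𝕄 : GBModel) (F : ClassForcing 𝕄) : Prop :=
  ∀ A : ZFSet, A ∈ 𝕄.M → (∀ a : ZFSet, a ∈ A → a ∈ F.P) →
    ∀ p ∈ F.P, ∃ q ∈ F.P, F.le q p ∧ ∃ Q : ZFSet, IsCompleteSub 𝕄 F Q ∧ StarProp 𝕄 F A q Q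

/-- Every new set added by `ℙ` is added by a set-sized complete subforcing of `ℙ`. -/
def EveryNewSetBySub (𝕄 : GBModel) (F : ClassForcing 𝕄) : Prop :=
  ∀ G : Set ZFSet, IsGeneric 𝕄 F.P F.le G →
    ∀ x : ZFSet, x ∈ MGen 𝕄 F.P G → x ∉ 𝕄.M →
      ∃ Q : ZFSet, IsCompleteSub 𝕄 F Q ∧ x ∈ MGen 𝕄 Q.toSet (G ∩ Q.toSet)

/-! ### The q-reduction of a name -/

/-- First component of a Kuratowski pair (junk value `∅` otherwise). -/
def fstZ (x : ZFSet) : ZFSet :=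
  if h : ∃ a b : ZFSet, x = a.pair b then h.choose else ∅

/-- Second component of a Kuratowski pair (junk value `∅` otherwise). -/
def sndZ (x : ZFSet) : ZFSet :=
  if h : ∃ a b : ZFSet, x = a.pair b then h.choose_spec.choose else ∅

/-- Cartesian product of two `ZFSet`s. -/
def zprod (a b : ZFSet) : ZFSet :=
  ZFSet.sep (fun x => ∃ u v : ZFSet, u ∈ a ∧ v ∈ b ∧ x = u.pair v)
    (ZFSet.powerset (ZFSet.powerset (a ∪ b)))

/-- Auxiliary rank-bounded version of the `q`-reduction of a name to `Q`. -/
def reduceAux (S : Set ZFSet) (le : ZFSet → ZFSet → Prop) (Q q : ZFSet) (o : Ordinal)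
    (σ : ZFSet) : ZFSet :=
  zimage
    (fun x =>
      (if h : (fstZ x).rank < o then reduceAux S le Q q (fstZ x).rank (fstZ x) else ∅).pair
        (sndZ x))
    (ZFSet.sep
      (fun x => ∃ τ r : ZFSet, x = τ.pair r ∧ r ∈ Q ∧
        ∃ a : ZFSet, τ.pair a ∈ σ ∧ ∀ s ∈ S, le s q → le s r → leStar S le s a)
      (zprod (ZFSet.sUnion (ZFSet.sUnion σ)) Q))
termination_by o
decreasing_by exact h

/-- The `q`-reduction `σ_q^ℚ = {⟨τ_q^ℚ, r⟩ | r ∈ ℚ ∧ ∃a (⟨τ,a⟩ ∈ σ ∧ ∀ s ≤ q,r (s ≤* a))}`. -/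
def reduceName (S : Set ZFSet) (le : ZFSet → ZFSet → Prop) (Q q σ : ZFSet) : ZFSet :=
  reduceAux S le Q q σ.rank σ

/-! ### Projections -/

/-- `f` is a projection from `⟨S, le⟩` (with maximum `one`) onto the subforcing with domain
`Qs`, respecting `X`. -/
def IsProjectionResp (S : Set ZFSet) (le : ZFSet → ZFSet → Prop) (one : ZFSet)
    (Qs X : Set ZFSet) (f : ZFSet → ZFSet) : Prop :=
  (∀ p ∈ S, f p ∈ Qs) ∧
  f one = one ∧
  (∀ p ∈ S, ∀ q ∈ S, le p q → le (f p) (f q)) ∧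
  (∀ p ∈ S, ∀ q ∈ Qs, le q (f p) → ∃ r ∈ S, le r p ∧ le (f r) q) ∧
  (∀ p ∈ X, ∀ q ∈ S, le (f q) p → le q p) ∧
  (∀ p ∈ X, f p = p)

/-- `ℙ` is approachable by projections: there is a class `Π ∈ 𝒞` whose sections `π_{X,y}`
are such that for every set `X ⊆ ℙ` there are a set `y` and a set-sized subforcing `ℚ ⊇ X ∪ {𝟙}`
of `ℙ` with `π_{X,y} : ℙ → ℚ` a projection respecting `X`. -/
def ApproachableByProjections (𝕄 : GBModel) (F : ClassForcing 𝕄) : Prop :=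
  ∃ Pi ∈ 𝕄.Cls, ∀ X : ZFSet, X ∈ 𝕄.M → (∀ x : ZFSet, x ∈ X → x ∈ F.P) →
    ∃ y ∈ 𝕄.M, ∃ Q : ZFSet, Q ∈ 𝕄.M ∧ Q.toSet ⊆ F.P ∧ (∀ x : ZFSet, x ∈ X → x ∈ Q) ∧
      F.one ∈ Q ∧ ∃ f : ZFSet → ZFSet,
        (∀ u ∈ F.P, ∀ v : ZFSet, (f u = v ↔ X.pair (y.pair (u.pair v)) ∈ Pi)) ∧
        IsProjectionResp F.P F.le F.one Q.toSet X.toSet f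

/-- `p ⊩ σ ⊆ τ` for the forcing with domain `S` and ordering `le`. -/
def ForcesSubset (𝕄 : GBModel) (S : Set ZFSet) (le : ZFSet → ZFSet → Prop)
    (p σ τ : ZFSet) : Prop :=
  ∀ G : Set ZFSet, IsGeneric 𝕄 S le G → p ∈ G → nameEval G σ ⊆ nameEval G τ

/-! ### Bounded names, turning proper classes into sets -/

/-- The possible values of the name `σ` in generic extensions. -/
def PossibleValues (𝕄 : GBModel) (S : Set ZFSet) (le : ZFSet → ZFSet → Prop)
    (σ : ZFSet) : Set ZFSet :=
  {x | ∃ G : Set ZFSet, IsGeneric 𝕄 S le G ∧ nameEval G σ = x}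

/-- The name `σ` is bounded: some `A ∈ M` covers all its possible values lying in `M`. -/
def IsBoundedName (𝕄 : GBModel) (F : ClassForcing 𝕄) (σ : ZFSet) : Prop :=
  ∃ A ∈ 𝕄.M, PossibleValues 𝕄 F.P F.le σ ∩ 𝕄.M ⊆ A.toSet

/-- `ℙ` has bounded names: every `ℙ`-name in `M` is bounded. -/
def HasBoundedNames (𝕄 : GBModel) (F : ClassForcing 𝕄) : Prop :=
  ∀ σ : ZFSet, σ ∈ 𝕄.M → IsName F.P σ → IsBoundedName 𝕄 F σ

/-- `X` is a proper class of `𝕄`: a class of `𝕄` that is not (the extension of) a set of `𝕄`. -/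
def IsProperClass (𝕄 : GBModel) (X : Set ZFSet) : Prop :=
  X ∈ 𝕄.Cls ∧ ¬ ∃ x ∈ 𝕄.M, x.toSet = X

/-- The proper class `X` of `𝕄` is turned into a set by forcing with `ℙ`: some `ℙ`-name in `M`
evaluates to `X` under some generic filter. -/
def TurnsIntoSet (𝕄 : GBModel) (F : ClassForcing 𝕄) (X : Set ZFSet) : Prop :=
  ∃ σ : ZFSet, σ ∈ 𝕄.M ∧ IsName F.P σ ∧
    ∃ G : Set ZFSet, IsGeneric 𝕄 F.P F.le G ∧ (nameEval G σ).toSet = X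

/-! ### Functions and partial functions as sets, collapse forcings -/

/-- `p` is a partial function from (a subset of) `γ` into the class `Y`. -/
def IsPFunOn (p γ : ZFSet) (Y : Set ZFSet) : Prop :=
  (∀ x : ZFSet, x ∈ p → ∃ a b : ZFSet, x = a.pair b ∧ a ∈ γ ∧ b ∈ Y) ∧
  ∀ a b b' : ZFSet, a.pair b ∈ p → a.pair b' ∈ p → b = b'

/-- The domain of a set of pairs. -/
def pdom (p : ZFSet) : Set ZFSet := {a | ∃ b : ZFSet, a.pair b ∈ p}

/-- `f` is (the graph of) an injective function from `X` into `Y`. -/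
def ZInjFun (f : ZFSet) (X Y : Set ZFSet) : Prop :=
  (∀ x : ZFSet, x ∈ f → ∃ a b : ZFSet, x = a.pair b ∧ a ∈ X ∧ b ∈ Y) ∧
  (∀ a b b' : ZFSet, a.pair b ∈ f → a.pair b' ∈ f → b = b') ∧
  (∀ a ∈ X, ∃ b : ZFSet, a.pair b ∈ f) ∧
  (∀ a a' b : ZFSet, a.pair b ∈ f → a'.pair b ∈ f → a = a')

/-- `D` has size less than the cardinality of `γ` in the sense of `M`:
no function of `M` injects `γ` into `D`. -/
def SmallerThan (𝕄 : GBModel) (γ : ZFSet) (D : Set ZFSet) : Prop :=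
  ¬ ∃ f ∈ 𝕄.M, ZInjFun f γ.toSet D

/-- Conditions of `Col(γ, Y)^M`: partial functions of `M` from `γ` to `Y` whose domain has
size less than the cardinality of `γ` in `M`. -/
def ColCond (𝕄 : GBModel) (γ : ZFSet) (Y : Set ZFSet) (p : ZFSet) : Prop :=
  p ∈ 𝕄.M ∧ IsPFunOn p γ Y ∧ SmallerThan 𝕄 γ (pdom p)

/-- Conditions of `Col₋*(γ, Y)^M`: those conditions of `Col(γ, Y)^M` whose domain is
an ordinal. -/
def ColStarCond (𝕄 : GBModel) (γ : ZFSet) (Y : Set ZFSet) (p : ZFSet) : Prop :=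
  ColCond 𝕄 γ Y p ∧ ∃ β : ZFSet, β.IsOrdinal ∧ pdom p = β.toSet

/-- `f` is (the graph of) a function with domain `I`. -/
def ZFuncOn (f I : ZFSet) : Prop :=
  (∀ x : ZFSet, x ∈ f → ∃ a b : ZFSet, x = a.pair b ∧ a ∈ I) ∧
  (∀ a b b' : ZFSet, a.pair b ∈ f → a.pair b' ∈ f → b = b') ∧
  (∀ a : ZFSet, a ∈ I → ∃ b : ZFSet, a.pair b ∈ f)

/-- Application of a set-function to an argument (junk value `∅` if undefined). -/
def zapp (f i : ZFSet) : ZFSet :=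
  if h : ∃ b : ZFSet, i.pair b ∈ f then h.choose else ∅

/-! ### Pretameness -/

/-- `ℙ` is pretame for `𝕄`: for every `p ∈ ℙ`, `I ∈ M` and every `𝒞`-coded sequence
`⟨D_i | i ∈ I⟩` (coded as the class of pairs `⟨i, x⟩` with `x ∈ D_i`) of dense subclasses
of `ℙ`, there are `q ≤ p` and `⟨d_i | i ∈ I⟩ ∈ M` with `d_i ⊆ D_i` predense below `q`. -/
def Pretame (𝕄 : GBModel) (F : ClassForcing 𝕄) : Prop :=
  ∀ p ∈ F.P, ∀ I : ZFSet, I ∈ 𝕄.M → ∀ D ∈ 𝕄.Cls,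
    (∀ i : ZFSet, i ∈ I →
      (∀ x : ZFSet, i.pair x ∈ D → x ∈ F.P) ∧ ∀ r ∈ F.P, ∃ s : ZFSet, i.pair s ∈ D ∧ F.le s r) →
    ∃ q ∈ F.P, F.le q p ∧ ∃ d ∈ 𝕄.M, ZFuncOn d I ∧
      ∀ i : ZFSet, i ∈ I → (∀ x : ZFSet, x ∈ zapp d i → i.pair x ∈ D) ∧
        ∀ r ∈ F.P, F.le r q → ∃ a : ZFSet, a ∈ zapp d i ∧ Compat F.P F.le r a

/-! ### The specific forcings of Sections 6 and 7 -/

/-- Conditions of Definition 6.8: (not necessarily finite) partial functions from `ω` to `2`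
lying in `M`. -/
def PCond (𝕄 : GBModel) (p : ZFSet) : Prop :=
  p ∈ 𝕄.M ∧ IsPFunOn p ZFSet.omega {x : ZFSet | x = ∅ ∨ x = ({∅} : ZFSet)}

/-- Conditions of the finite support product `ℚ` of `ω` many copies of `ℙ`:
finite sequences `⟨p₀, …, p_k⟩` of `ℙ`-conditions. -/
def QCond (𝕄 : GBModel) (s : ZFSet) : Prop :=
  s ∈ 𝕄.M ∧ ∃ n : ZFSet, n ∈ ZFSet.omega ∧ ZFuncOn s n ∧
    ∀ i : ZFSet, i ∈ n → PCond 𝕄 (zapp s i)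

/-- The coordinatewise ordering on `ℚ`. -/
def QLe (s' s : ZFSet) : Prop :=
  pdom s ⊆ pdom s' ∧ ∀ i ∈ pdom s, zapp s i ⊆ zapp s' i

/-- The power class `𝒫(ω)^M`. -/
def PowOmega (𝕄 : GBModel) : Set ZFSet :=
  {x : ZFSet | x ∈ 𝕄.M ∧ x ⊆ ZFSet.omega}

/-- `X ⊆ M` is definable over `⟨M, ∈⟩` (from set parameters). -/
def DefinableOver (Mset : Set ZFSet) (X : Set ZFSet) : Prop :=
  ∃ (φ : EFormula) (v : ℕ → ZFSet), (∀ n, v n ∈ Mset) ∧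
    X = {x : ZFSet | x ∈ Mset ∧ EFormula.Sat Mset (Function.update v 0 x) φ}

/-- Every set of `M` is countable in `M`: it injects into `ω` by a function of `M`. -/
def AllSetsCountable (𝕄 : GBModel) : Prop :=
  ∀ x ∈ 𝕄.M, ∃ f ∈ 𝕄.M, ZInjFun f x.toSet ZFSet.omega.toSet

/-!
Every set of `M` is coded by a point of a well-founded relation on `ω`, hence by a real of `M`.
A condition of `ℚ` may decide a whole coordinate, so by genericity each generic real lies in `M` and
each real of `M` is one of the `ω` many generic reals. Quantifiers over `M` therefore turn into
quantifiers over indices of generic reals, and equality and membership of coded sets into existence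
of bisimulations.

Statements about the generic reals built with connectives and quantifiers over `ω` are in turn
equivalent to equalities of names. This holds for `p ∈ G` and for its negation, so it remains to
treat countable conjunctions and disjunctions. All `σᵢ = τᵢ` hold iff `{{σᵢ} | i} = {{σᵢ, τᵢ} | i}`.
With `D = {{σᵢ} | i}`, some `σᵢ = τᵢ` holds iff `D ∈ {D ∪ {{σᵢ, τᵢ}} | i}`, and `τ ∈ σ` iff
`σ = σ ∪ {τ}`.

Hence a definable forcing relation for equality would define truth in `M`, which the diagonal class
of pairs of names refutes.
-/

universe u

/-! ### Definability over the model -/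

section Definability

/-- The elements of the model `M`, as a type of its own so that it can carry `∈`. -/
structure Elem (𝕄 : GBModel.{u}) : Type (u + 1) where
  val : ZFSet.{u}
  property : val ∈ 𝕄.M

/-- Variable assignments in `M`. -/
abbrev Env (𝕄 : GBModel.{u}) : Type (u + 1) := ℕ → Elem 𝕄

instance (𝕄 : GBModel.{u}) : Membership (Elem 𝕄) (Elem 𝕄) := ⟨fun y x => x.val ∈ y.val⟩

variable {𝕄 : GBModel.{u}}

namespace Elem

theorem mem_def {x y : Elem 𝕄} : x ∈ y ↔ x.val ∈ y.val := Iff.rfl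

theorem val_inj {x y : Elem 𝕄} : x.val = y.val ↔ x = y := by
  cases x; cases y; simp

/-- An element of an element of `M`, which is in `M` by transitivity. -/
def ofMem (x : Elem 𝕄) {y : ZFSet.{u}} (hy : y ∈ x.val) : Elem 𝕄 :=
  ⟨y, 𝕄.transitive _ x.property _ hy⟩

@[ext]
theorem ext {x y : Elem 𝕄} (h : ∀ z : Elem 𝕄, z ∈ x ↔ z ∈ y) : x = y :=
  val_inj.1 <| ZFSet.ext fun _ => ⟨fun hz => (h (x.ofMem hz)).1 hz, fun hz => (h (y.ofMem hz)).2 hz⟩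

@[elab_as_elim]
theorem induction {P : Elem 𝕄 → Prop} (x : Elem 𝕄) (h : ∀ x, (∀ y ∈ x, P y) → P x) : P x := by
  obtain ⟨z, hz⟩ := x
  induction z using ZFSet.inductionOn with
  | h z ih => exact h _ fun y hy => ih y.val hy y.property

theorem notMem_self (x : Elem 𝕄) : x ∉ x := ZFSet.mem_irrefl x.val

end Elem

/-- The stream `x, v 0, v 1, …`. -/
def scons {α : Type*} (x : α) (v : ℕ → α) : ℕ → α
  | 0 => x
  | n + 1 => v n

@[simp]
theorem scons_zero {α : Type*} (x : α) (v : ℕ → α) : scons x v 0 = x := rfl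

@[simp]
theorem scons_succ {α : Type*} (x : α) (v : ℕ → α) (n : ℕ) : scons x v (n + 1) = v n := rfl

/-- Predicates of assignments that are first-order definable over `M` with class parameters,
as a shallow embedding with de Bruijn indices: a quantifier binds variable `0` and shifts the
remaining ones by one. -/
inductive Definable (𝕄 : GBModel.{u}) : (Env 𝕄 → Prop) → Prop
  | mem (i j : ℕ) : Definable 𝕄 fun v => v i ∈ v j
  | eq (i j : ℕ) : Definable 𝕄 fun v => v i = v j
  | cls (C : Set ZFSet.{u}) (hC : C ∈ 𝕄.Cls) (i : ℕ) : Definable 𝕄 fun v => (v i).val ∈ C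
  | not {P} : Definable 𝕄 P → Definable 𝕄 fun v => ¬ P v
  | or {P Q} : Definable 𝕄 P → Definable 𝕄 Q → Definable 𝕄 fun v => P v ∨ Q v
  | ex {P : Env 𝕄 → Elem 𝕄 → Prop} :
      (Definable 𝕄 fun v => P (fun n => v (n + 1)) (v 0)) → Definable 𝕄 fun v => ∃ x, P v x

namespace Definable

variable {P Q : Env 𝕄 → Prop}

theorem rename (hP : Definable 𝕄 P) (g : ℕ → ℕ) : Definable 𝕄 fun v => P fun n => v (g n) := by
  induction hP generalizing g with
  | mem i j => exact mem _ _
  | eq i j => exact eq _ _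
  | cls C hC i => exact cls C hC _
  | not _ ih => exact (ih g).not
  | or _ _ ihP ihQ => exact (ihP g).or (ihQ g)
  | ex _ ih => exact ex (ih fun n => Nat.casesOn n 0 fun m => g m + 1)

theorem exists_finite_support (hP : Definable 𝕄 P) :
    ∃ N : ℕ, ∀ v w : Env 𝕄, (∀ n < N, v n = w n) → (P v ↔ P w) := by
  induction hP with
  | mem i j | eq i j =>
    exact ⟨max i j + 1, fun v w h => by beta_reduce; rw [h i (by omega), h j (by omega)]⟩
  | cls _ _ i => exact ⟨i + 1, fun v w h => by beta_reduce; rw [h i (by omega)]⟩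
  | not _ ih =>
    obtain ⟨N, hN⟩ := ih
    exact ⟨N, fun v w h => not_congr (hN v w h)⟩
  | or _ _ ihP ihQ =>
    obtain ⟨N, hN⟩ := ihP
    obtain ⟨N', hN'⟩ := ihQ
    exact ⟨max N N', fun v w h => or_congr (hN v w fun n hn => h n (by omega))
      (hN' v w fun n hn => h n (by omega))⟩
  | ex _ ih =>
    obtain ⟨N, hN⟩ := ih
    refine ⟨N, fun v w h => exists_congr fun x => hN (scons x v) (scons x w) fun n hn => ?_⟩
    cases n with
    | zero => rfl
    | succ m => exact h m (by omega)

/- The renaming `g` lets a de Bruijn quantifier be translated to a quantifier over a named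
variable that is fresh for the range of `g` on the support. -/
theorem exists_formula {Cs : ℕ → Set ZFSet.{u}} (hCs : 𝕄.Cls = Set.range Cs)
    (hP : Definable 𝕄 P) (g : ℕ → ℕ) :
    ∃ φ : GBFormula, ∀ v : Env 𝕄, φ.Sat 𝕄.M Cs (fun n => (v n).val) ↔ P fun n => v (g n) := by
  induction hP generalizing g with
  | mem i j => exact ⟨.mem (g i) (g j), fun v => Iff.rfl⟩
  | eq i j => exact ⟨.eq (g i) (g j), fun v => Elem.val_inj⟩
  | cls C hC i =>
    obtain ⟨n, rfl⟩ : C ∈ Set.range Cs := hCs ▸ hC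
    exact ⟨.cls (g i) n, fun v => Iff.rfl⟩
  | not _ ih =>
    obtain ⟨φ, hφ⟩ := ih g
    exact ⟨.not φ, fun v => not_congr (hφ v)⟩
  | or _ _ ihP ihQ =>
    obtain ⟨φ, hφ⟩ := ihP g
    obtain ⟨ψ, hψ⟩ := ihQ g
    exact ⟨.or φ ψ, fun v => or_congr (hφ v) (hψ v)⟩
  | @ex P hP ih =>
    obtain ⟨N, hN⟩ := hP.exists_finite_support
    obtain ⟨i, hi⟩ := Infinite.exists_notMem_finset ((Finset.range N).image g)
    obtain ⟨φ, hφ⟩ := ih fun n => Nat.casesOn n i g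
    have sat_update (v : Env 𝕄) (x : Elem 𝕄) :
        φ.Sat 𝕄.M Cs (Function.update (fun n => (v n).val) i x.val) ↔ P (fun n => v (g n)) x := by
      rw [show Function.update (fun n => (v n).val) i x.val = fun n => (Function.update v i x n).val
        from (Function.comp_update Elem.val v i x).symm, hφ]
      refine hN (fun n => Function.update v i x (Nat.casesOn n i g))
        (scons x fun n => v (g n)) fun n hn => ?_
      cases n with
      | zero => simp
      | succ m =>
        have hne : g m ≠ i := fun h =>
          hi (Finset.mem_image.2 ⟨m, Finset.mem_range.2 (by omega), h⟩)
        simp [hne]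
    exact ⟨.ex i φ, fun v => ⟨fun ⟨x, hx, h⟩ => ⟨⟨x, hx⟩, (sat_update v ⟨x, hx⟩).1 h⟩,
      fun ⟨x, h⟩ => ⟨x.val, x.property, (sat_update v x).2 h⟩⟩⟩

theorem mem_cls (hP : Definable 𝕄 P) (v : Env 𝕄) :
    {x : ZFSet.{u} | ∃ hx : x ∈ 𝕄.M, P (scons ⟨x, hx⟩ v)} ∈ 𝕄.Cls := by
  obtain ⟨Cs, hCs⟩ := 𝕄.countable_Cls.exists_eq_range ⟨_, 𝕄.sets_are_classes _ 𝕄.empty_mem⟩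
  obtain ⟨φ, hφ⟩ := hP.exists_formula hCs id
  have update_eq (x : ZFSet.{u}) (hx : x ∈ 𝕄.M) :
      Function.update (fun n => (v (n - 1)).val) 0 x =
        fun n => (scons (⟨x, hx⟩ : Elem 𝕄) v n).val := by
    funext n
    cases n <;> simp
  convert 𝕄.comprehension φ (fun n => (v (n - 1)).val) Cs (fun n => (v _).property)
    (fun n => hCs ▸ ⟨n, rfl⟩) using 1
  ext x
  exact ⟨fun ⟨hx, h⟩ => ⟨hx, by rw [update_eq x hx]; exact (hφ _).2 h⟩,
    fun ⟨hx, h⟩ => ⟨hx, by rw [update_eq x hx] at h; exact (hφ _).1 h⟩⟩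

theorem congr (h : ∀ v, P v ↔ Q v) (hP : Definable 𝕄 P) : Definable 𝕄 Q :=
  (funext fun v => propext (h v) : P = Q) ▸ hP

theorem and (hP : Definable 𝕄 P) (hQ : Definable 𝕄 Q) : Definable 𝕄 fun v => P v ∧ Q v :=
  (hP.not.or hQ.not).not.congr fun _ => by tauto

theorem imp (hP : Definable 𝕄 P) (hQ : Definable 𝕄 Q) : Definable 𝕄 fun v => P v → Q v :=
  (hP.not.or hQ).congr fun _ => by tauto

theorem iff (hP : Definable 𝕄 P) (hQ : Definable 𝕄 Q) : Definable 𝕄 fun v => P v ↔ Q v :=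
  ((hP.imp hQ).and (hQ.imp hP)).congr fun _ => by tauto

theorem all {P : Env 𝕄 → Elem 𝕄 → Prop} (hP : Definable 𝕄 fun v => P (fun n => v (n + 1)) (v 0)) :
    Definable 𝕄 fun v => ∀ x, P v x :=
  (ex (P := fun v x => ¬ P v x) hP.not).not.congr fun _ => by push Not; rfl

end Definable

/-- Functions of assignments whose graph is definable over `M` with class parameters; variable `0`
of the graph is the value. -/
def DefinableTerm (t : Env 𝕄 → Elem 𝕄) : Prop :=
  Definable 𝕄 fun v => v 0 = t fun n => v (n + 1)

variable {s t r : Env 𝕄 → Elem 𝕄}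

theorem DefinableTerm.var (i : ℕ) : DefinableTerm (𝕄 := 𝕄) fun v => v i := Definable.eq 0 (i + 1)

theorem DefinableTerm.const (a : Elem 𝕄) : DefinableTerm fun _ => a := by
  have hcls := 𝕄.sets_are_classes _ (𝕄.pair_mem _ a.property _ a.property)
  refine (Definable.cls _ hcls 0).congr fun v => ?_
  change (v 0).val ∈ ({a.val, a.val} : ZFSet) ↔ _
  rw [ZFSet.mem_pair, or_self, Elem.val_inj]

theorem DefinableTerm.rename (ht : DefinableTerm t) (g : ℕ → ℕ) :
    DefinableTerm fun v => t fun n => v (g n) :=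
  Definable.rename (P := fun v => v 0 = t fun n => v (n + 1)) ht (scons 0 fun m => g m + 1)

theorem DefinableTerm.eq_scons (ht : DefinableTerm t) (i j k : ℕ) :
    Definable 𝕄 fun v => v i = t (scons (v j) fun n => v (n + k)) := by
  refine (Definable.rename (P := fun v => v 0 = t fun n => v (n + 1)) ht
    (scons i (scons j (· + k)))).congr fun v => ?_
  rw [show (fun n => v (scons i (scons j (· + k)) (n + 1))) = scons (v j) fun n => v (n + k) from
    funext fun n => by cases n <;> rfl]
  exact Iff.rfl

namespace Definable

theorem subst {P : Env 𝕄 → Elem 𝕄 → Prop}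
    (hP : Definable 𝕄 fun v => P (fun n => v (n + 1)) (v 0)) (hs : DefinableTerm s) :
    Definable 𝕄 fun v => P v (s v) :=
  (ex (P := fun v x => x = s v ∧ P v x) (hs.and hP)).congr fun _ => by simp

theorem comp₁ {R : Elem 𝕄 → Prop} (hR : Definable 𝕄 fun v => R (v 0)) (hs : DefinableTerm s) :
    Definable 𝕄 fun v => R (s v) :=
  subst (P := fun _ x => R x) hR hs

theorem comp₂ {R : Elem 𝕄 → Elem 𝕄 → Prop} (hR : Definable 𝕄 fun v => R (v 0) (v 1))
    (hs : DefinableTerm s) (ht : DefinableTerm t) : Definable 𝕄 fun v => R (s v) (t v) :=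
  subst (P := fun v x => R x (t v)) (subst (P := fun v y => R (v 0) y)
    (hR.rename (scons 1 fun _ => 0)) (ht.rename (· + 1))) hs

theorem comp₃ {R : Elem 𝕄 → Elem 𝕄 → Elem 𝕄 → Prop}
    (hR : Definable 𝕄 fun v => R (v 0) (v 1) (v 2)) (hs : DefinableTerm s)
    (ht : DefinableTerm t) (hr : DefinableTerm r) : Definable 𝕄 fun v => R (s v) (t v) (r v) :=
  subst (P := fun v x => R x (t v) (r v)) (subst (P := fun v y => R (v 0) y (r fun n => v (n + 1)))
    (subst (P := fun v z => R (v 1) (v 0) z) (hR.rename (scons 2 (scons 1 fun _ => 0)))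
      (hr.rename (· + 2))) (ht.rename (· + 1))) hs

end Definable

end Definability

/-! ### Set operations in the model -/

section SetOperations

variable {𝕄 : GBModel.{u}} {s t r : Env 𝕄 → Elem 𝕄}

theorem Definable.mem_terms (hs : DefinableTerm s) (ht : DefinableTerm t) :
    Definable 𝕄 fun v => s v ∈ t v :=
  comp₂ (R := (· ∈ ·)) (mem 0 1) hs ht

theorem Definable.eq_terms (hs : DefinableTerm s) (ht : DefinableTerm t) :
    Definable 𝕄 fun v => s v = t v :=
  comp₂ (R := (· = ·)) (eq 0 1) hs ht

theorem Definable.cls_term {C : Set ZFSet.{u}} (hC : C ∈ 𝕄.Cls) (hs : DefinableTerm s) :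
    Definable 𝕄 fun v => (s v).val ∈ C :=
  comp₁ (R := fun x => x.val ∈ C) (cls C hC 0) hs

theorem DefinableTerm.comp₁ {f : Elem 𝕄 → Elem 𝕄} (hf : DefinableTerm fun v => f (v 0))
    (hs : DefinableTerm s) : DefinableTerm fun v => f (s v) :=
  Definable.comp₂ (R := fun x y => x = f y) hf (var 0) (hs.rename (· + 1))

theorem DefinableTerm.comp₂ {f : Elem 𝕄 → Elem 𝕄 → Elem 𝕄}
    (hf : DefinableTerm fun v => f (v 0) (v 1)) (hs : DefinableTerm s) (ht : DefinableTerm t) :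
    DefinableTerm fun v => f (s v) (t v) :=
  Definable.comp₃ (R := fun x y z => x = f y z) hf (var 0) (hs.rename (· + 1)) (ht.rename (· + 1))

theorem DefinableTerm.of_mem_iff {P : Env 𝕄 → Elem 𝕄 → Prop} (h : ∀ v x, x ∈ t v ↔ P v x)
    (hP : Definable 𝕄 fun v => P (fun n => v (n + 1)) (v 0)) : DefinableTerm t :=
  (Definable.all (P := fun v x => x ∈ v 0 ↔ P (fun n => v (n + 1)) x)
    ((Definable.mem 0 1).iff (hP.rename (scons 0 (· + 2))))).congr fun v => by
      simp only [Elem.ext_iff (x := v 0), h]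

theorem DefinableTerm.ite {P : Env 𝕄 → Prop} (hP : Definable 𝕄 P) (hs : DefinableTerm s)
    (ht : DefinableTerm t) : DefinableTerm fun v => if P v then s v else t v := by
  have hP' := hP.rename (· + 1)
  refine ((hP'.and hs).or (hP'.not.and ht)).congr fun v => ?_
  by_cases h : P fun n => v (n + 1) <;> simp [h]

namespace Elem

/-- The unordered pair `{a, b}`. -/
def upair (a b : Elem 𝕄) : Elem 𝕄 := ⟨{a.val, b.val}, 𝕄.pair_mem _ a.property _ b.property⟩

instance : Singleton (Elem 𝕄) (Elem 𝕄) := ⟨fun a => upair a a⟩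

/-- The Kuratowski pair `⟨a, b⟩`. -/
def pair (a b : Elem 𝕄) : Elem 𝕄 := upair {a} (upair a b)

/-- The union `⋃ a`. -/
def sUnion (a : Elem 𝕄) : Elem 𝕄 := ⟨ZFSet.sUnion a.val, 𝕄.sUnion_mem _ a.property⟩

instance : Union (Elem 𝕄) := ⟨fun a b => sUnion (upair a b)⟩

instance : EmptyCollection (Elem 𝕄) := ⟨⟨∅, 𝕄.empty_mem⟩⟩

/-- The set `ω`. -/
def omega : Elem 𝕄 := ⟨ZFSet.omega, 𝕄.omega_mem⟩

variable {a b c d x : Elem 𝕄}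

theorem mem_upair : x ∈ upair a b ↔ x = a ∨ x = b := by
  simp only [mem_def, upair, ZFSet.mem_pair, val_inj]

theorem mem_singleton : x ∈ ({a} : Elem 𝕄) ↔ x = a :=
  mem_upair.trans (or_self_iff)

theorem pair_val (a b : Elem 𝕄) : (pair a b).val = ZFSet.pair a.val b.val := by
  change ({{a.val, a.val}, {a.val, b.val}} : ZFSet) = _
  rw [ZFSet.pair_eq_singleton, ZFSet.pair]

theorem pair_inj : pair a b = pair c d ↔ a = c ∧ b = d := by
  rw [← val_inj, pair_val, pair_val, ZFSet.pair_inj, val_inj, val_inj]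

theorem mem_sUnion : x ∈ sUnion a ↔ ∃ y ∈ a, x ∈ y :=
  ZFSet.mem_sUnion.trans
    ⟨fun ⟨_, hy, hx⟩ => ⟨a.ofMem hy, hy, hx⟩, fun ⟨y, hy, hx⟩ => ⟨y.val, hy, hx⟩⟩

theorem mem_union : x ∈ a ∪ b ↔ x ∈ a ∨ x ∈ b :=
  mem_sUnion.trans (by simp [mem_upair])

theorem notMem_empty (x : Elem 𝕄) : x ∉ (∅ : Elem 𝕄) := ZFSet.notMem_empty x.val

theorem exists_pair_mem_of_pair_mem {y z : ZFSet.{u}} (h : y.pair z ∈ a.val) :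
    ∃ y' z' : Elem 𝕄, y = y'.val ∧ z = z'.val ∧ pair y' z' ∈ a := by
  have hyz : ({y, z} : ZFSet) ∈ 𝕄.M :=
    𝕄.transitive _ (a.ofMem h).property _ (by simp [ofMem, ZFSet.pair])
  refine ⟨⟨y, 𝕄.transitive _ hyz _ (by simp)⟩, ⟨z, 𝕄.transitive _ hyz _ (by simp)⟩, rfl, rfl, ?_⟩
  rwa [mem_def, pair_val]

end Elem

namespace DefinableTerm

theorem upair (hs : DefinableTerm s) (ht : DefinableTerm t) :
    DefinableTerm fun v => Elem.upair (s v) (t v) :=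
  comp₂ (f := Elem.upair)
    (of_mem_iff (fun _ _ => Elem.mem_upair) ((Definable.eq 0 1).or (Definable.eq 0 2))) hs ht

theorem pair (hs : DefinableTerm s) (ht : DefinableTerm t) :
    DefinableTerm fun v => Elem.pair (s v) (t v) :=
  (hs.upair hs).upair (hs.upair ht)

theorem sUnion (hs : DefinableTerm s) : DefinableTerm fun v => Elem.sUnion (s v) :=
  comp₁ (f := Elem.sUnion) (of_mem_iff (fun _ _ => Elem.mem_sUnion)
    (Definable.ex ((Definable.mem 0 2).and (Definable.mem 1 0)))) hs

theorem union (hs : DefinableTerm s) (ht : DefinableTerm t) : DefinableTerm fun v => s v ∪ t v :=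
  (hs.upair ht).sUnion

end DefinableTerm

theorem Definable.exists_sep {P : Env 𝕄 → Prop} (hP : Definable 𝕄 P) (v : Env 𝕄) (a : Elem 𝕄) :
    ∃ b : Elem 𝕄, ∀ x, x ∈ b ↔ x ∈ a ∧ P (scons x v) := by
  obtain ⟨b, hb, mem_b⟩ := 𝕄.separation _ (hP.mem_cls v) a.val a.property
  exact ⟨⟨b, hb⟩, fun x => (mem_b x.val).trans <|
    and_congr_right fun _ => ⟨fun ⟨_, h⟩ => h, fun h => ⟨x.property, h⟩⟩⟩

theorem Definable.exists_collection {P : Env 𝕄 → Elem 𝕄 → Elem 𝕄 → Prop}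
    (hP : Definable 𝕄 fun v => P (fun n => v (n + 2)) (v 0) (v 1)) (v : Env 𝕄) (a : Elem 𝕄)
    (ha : ∀ x ∈ a, ∃ y, P v x y) : ∃ b : Elem 𝕄, ∀ x ∈ a, ∃ y ∈ b, P v x y := by
  have hpairs : Definable 𝕄 fun v => ∃ x y, v 0 = Elem.pair x y ∧ P (fun n => v (n + 1)) x y :=
    ex (ex ((eq_terms (.var 2) ((DefinableTerm.var 1).pair (.var 0))).and
      (hP.rename (scons 1 (scons 0 (· + 3))))))
  have pair_mem (x y : Elem 𝕄) (h : P v x y) : x.val.pair y.val ∈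
      {z : ZFSet | ∃ hz : z ∈ 𝕄.M, ∃ x y, (⟨z, hz⟩ : Elem 𝕄) = Elem.pair x y ∧ P v x y} :=
    Elem.pair_val x y ▸ ⟨(Elem.pair x y).property, x, y, rfl, h⟩
  obtain ⟨b, hb, mem_b⟩ := 𝕄.collection _ (hpairs.mem_cls v) a.val a.property fun x hx => by
    obtain ⟨y, hy⟩ := ha (a.ofMem hx) hx
    exact ⟨y.val, y.property, pair_mem (a.ofMem hx) y hy⟩
  refine ⟨⟨b, hb⟩, fun x hx => ?_⟩
  obtain ⟨y, hy, hz, x', y', he, hP⟩ := mem_b x.val hx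
  obtain ⟨rfl, rfl⟩ : x = x' ∧ (⟨y, 𝕄.transitive b hb y hy⟩ : Elem 𝕄) = y' :=
    Elem.pair_inj.1 (Elem.val_inj.1 ((Elem.pair_val _ _).trans (congrArg Elem.val he)))
  exact ⟨_, hy, hP⟩

namespace DefinableTerm

theorem exists_image (ht : DefinableTerm t) (v : Env 𝕄) (a : Elem 𝕄) :
    ∃ b : Elem 𝕄, ∀ y, y ∈ b ↔ ∃ x ∈ a, y = t (scons x v) := by
  obtain ⟨b, hb⟩ := Definable.exists_collection (P := fun v x y => y = t (scons x v))
    (ht.eq_scons 1 0 2) v a fun x _ => ⟨_, rfl⟩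
  have hdef : Definable 𝕄 fun v => ∃ x ∈ v 1, v 0 = t (scons x fun n => v (n + 2)) :=
    Definable.ex ((Definable.mem 0 2).and (ht.eq_scons 1 0 3))
  obtain ⟨c, hc⟩ := hdef.exists_sep (scons a v) b
  refine ⟨c, fun y => (hc y).trans ⟨fun h => h.2, fun ⟨x, hx, hy⟩ => ⟨?_, x, hx, hy⟩⟩⟩
  obtain ⟨_, hmem, rfl⟩ := hb x hx
  rwa [hy]

/-- The set `{t (x, v) | x ∈ a}`, which exists in `M` by replacement. -/
def image (ht : DefinableTerm t) (a : Elem 𝕄) (v : Env 𝕄) : Elem 𝕄 :=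
  (ht.exists_image v a).choose

theorem mem_image (ht : DefinableTerm t) {a y : Elem 𝕄} {v : Env 𝕄} :
    y ∈ ht.image a v ↔ ∃ x ∈ a, y = t (scons x v) :=
  (ht.exists_image v a).choose_spec y

theorem image_definable (ht : DefinableTerm t) (hs : DefinableTerm s) :
    DefinableTerm fun v => ht.image (s v) v :=
  of_mem_iff (fun _ _ => ht.mem_image)
    (Definable.ex ((Definable.mem_terms (var 0) (hs.rename (· + 2))).and (ht.eq_scons 1 0 2)))

end DefinableTerm

/-- The von Neumann numeral of `n`. -/
def numeral : ℕ → Elem 𝕄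
  | 0 => ∅
  | n + 1 => numeral n ∪ {numeral n}

theorem mem_numeral {n : ℕ} {x : Elem 𝕄} : x ∈ (numeral n : Elem 𝕄) ↔ ∃ m < n, x = numeral m := by
  induction n with
  | zero => simpa [numeral] using Elem.notMem_empty x
  | succ n ih =>
    rw [numeral, Elem.mem_union, ih, Elem.mem_singleton, Nat.exists_lt_succ_right]

theorem numeral_injective : Function.Injective (numeral : ℕ → Elem 𝕄) := by
  intro m n h
  by_contra hne
  wlog hlt : m < n generalizing m n
  · exact this h.symm (Ne.symm hne) (by omega)
  exact Elem.notMem_self (numeral n : Elem 𝕄) (mem_numeral.2 ⟨m, hlt, h.symm⟩)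

theorem mk_ofNat_eq_numeral (n : ℕ) : ZFSet.mk (PSet.ofNat n) = (numeral n : Elem 𝕄).val := by
  induction n with
  | zero => rfl
  | succ n ih =>
    change insert (ZFSet.mk (PSet.ofNat n)) (ZFSet.mk (PSet.ofNat n)) = _
    rw [ih]
    ext z
    change _ ↔ z ∈ ZFSet.sUnion {(numeral n).val, {(numeral n).val, (numeral n).val}}
    simp [or_comm]

theorem mem_omega {x : Elem 𝕄} : x ∈ (Elem.omega : Elem 𝕄) ↔ ∃ n, x = numeral n := by
  simp only [← Elem.val_inj, ← mk_ofNat_eq_numeral]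
  obtain ⟨y, hy⟩ := Quotient.exists_rep x.val
  rw [Elem.mem_def, ← hy]
  exact ⟨fun ⟨n, h⟩ => ⟨n.down, Quotient.sound h⟩, fun ⟨n, h⟩ => ⟨⟨n⟩, Quotient.exact h⟩⟩

theorem numeral_mem_omega (n : ℕ) : (numeral n : Elem 𝕄) ∈ (Elem.omega : Elem 𝕄) :=
  mem_omega.2 ⟨n, rfl⟩

end SetOperations

/-! ### Names and generic filters -/

section Names

theorem rank_fst_lt {τ p σ : ZFSet.{u}} (h : τ.pair p ∈ σ) : τ.rank < σ.rank := by
  have hτ : ({τ} : ZFSet) ∈ τ.pair p := by simp [ZFSet.pair]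
  exact (ZFSet.rank_lt_of_mem (ZFSet.mem_singleton.2 rfl)).trans
    ((ZFSet.rank_lt_of_mem hτ).trans (ZFSet.rank_lt_of_mem h))

theorem isName_iff {S : Set ZFSet.{u}} {σ : ZFSet.{u}} :
    IsName S σ ↔ ∀ x ∈ σ, ∃ τ p, x = τ.pair p ∧ p ∈ S ∧ IsName S τ := by
  rw [IsName, IsNameAux]
  refine forall₂_congr fun x hx => exists₂_congr fun τ p => ?_
  exact and_congr_right fun e => and_congr_right fun _ =>
    ⟨fun ⟨_, h⟩ => h, fun h => ⟨rank_fst_lt (e ▸ hx : τ.pair p ∈ σ), h⟩⟩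

theorem mem_zimage {f : ZFSet.{u} → ZFSet.{u}} {x y : ZFSet.{u}} :
    y ∈ zimage f x ↔ ∃ z ∈ x, f z = y :=
  @ZFSet.mem_image f (Classical.allZFSetDefinable _) x y

theorem mem_nameEval {G : Set ZFSet.{u}} {σ z : ZFSet.{u}} :
    z ∈ nameEval G σ ↔ ∃ τ p, τ.pair p ∈ σ ∧ p ∈ G ∧ z = nameEval G τ := by
  rw [nameEval, nameEvalAux, mem_zimage]
  constructor
  · rintro ⟨τ, hτ, rfl⟩
    obtain ⟨_, p, hp, h⟩ := ZFSet.mem_sep.1 hτ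
    exact ⟨τ, p, h, hp, dif_pos (rank_fst_lt h)⟩
  · rintro ⟨τ, p, h, hp, rfl⟩
    have hτ : τ ∈ ZFSet.sUnion (ZFSet.sUnion σ) :=
      ZFSet.mem_sUnion.2 ⟨{τ}, ZFSet.mem_sUnion.2 ⟨_, h, by simp [ZFSet.pair]⟩, by simp⟩
    exact ⟨τ, ZFSet.mem_sep.2 ⟨hτ, p, hp, h⟩, dif_pos (rank_fst_lt h)⟩

variable {𝕄 : GBModel.{u}}

/-- The value `σ^G` of an element `σ` of `M`, read as a name. -/
def Elem.eval (σ : Elem 𝕄) (G : Set ZFSet.{u}) : ZFSet.{u} := nameEval G σ.val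

theorem Elem.mem_eval {G : Set ZFSet.{u}} {σ : Elem 𝕄} {z : ZFSet.{u}} :
    z ∈ σ.eval G ↔ ∃ τ p : Elem 𝕄, Elem.pair τ p ∈ σ ∧ p.val ∈ G ∧ z = τ.eval G := by
  rw [Elem.eval, mem_nameEval]
  constructor
  · rintro ⟨τ, p, h, hp, rfl⟩
    obtain ⟨τ', p', rfl, rfl, h'⟩ := Elem.exists_pair_mem_of_pair_mem h
    exact ⟨τ', p', h', hp, rfl⟩
  · rintro ⟨τ, p, h, hp, rfl⟩
    rw [Elem.mem_def, Elem.pair_val] at h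
    exact ⟨τ.val, p.val, h, hp, rfl⟩

namespace ClassForcing

variable (F : ClassForcing 𝕄)

/-- The names of `M` for the forcing `F`. -/
def Name (σ : Elem 𝕄) : Prop := IsName F.P σ.val

/-- The maximal condition of `F` as an element of `M`. -/
def top : Elem 𝕄 := ⟨F.one, 𝕄.classes_sub _ F.P_cls F.one_mem⟩

/-- The generic filters of `F` over `𝕄`. -/
def Generic (G : Set ZFSet.{u}) : Prop := IsGeneric 𝕄 F.P F.le G

variable {F}

theorem name_iff {σ : Elem 𝕄} :
    F.Name σ ↔ ∀ x ∈ σ, ∃ τ p : Elem 𝕄, x = Elem.pair τ p ∧ p.val ∈ F.P ∧ F.Name τ := by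
  rw [Name, isName_iff]
  constructor
  · intro h x hx
    obtain ⟨τ, p, e, hp, hτ⟩ := h x.val hx
    obtain ⟨τ', p', rfl, rfl, -⟩ := Elem.exists_pair_mem_of_pair_mem (e ▸ hx : τ.pair p ∈ σ.val)
    exact ⟨τ', p', Elem.val_inj.1 (e.trans (Elem.pair_val τ' p').symm), hp, hτ⟩
  · intro h x hx
    obtain ⟨τ, p, e, hp, hτ⟩ := h (σ.ofMem hx) hx
    exact ⟨τ.val, p.val, (congrArg Elem.val e).trans (Elem.pair_val τ p), hp, hτ⟩

theorem Generic.top_mem {G : Set ZFSet.{u}} (hG : F.Generic G) : F.top.val ∈ G := by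
  obtain ⟨⟨hsub, ⟨p, hp⟩, hup, -⟩, -⟩ := hG
  exact hup p hp _ F.one_mem (F.le_one p (hsub hp))

variable (F) in
/-- The conditions of `F`, as a type of its own so that it can carry the reverse of the order of
`F`: stronger conditions are larger, and filters are ideals. -/
structure Condition where
  val : ZFSet.{u}
  property : val ∈ F.P

instance : Preorder F.Condition where
  le p q := F.le q.val p.val
  le_refl p := F.le_refl p.val p.property
  le_trans p q r hpq hqr := F.le_trans r.val q.val p.val hqr hpq

theorem isFilterOn_image_val (I : Order.Ideal F.Condition) :
    IsFilterOn F.P F.le (Condition.val '' (I : Set F.Condition)) := by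
  refine ⟨?_, I.nonempty.image _, ?_, ?_⟩
  · rintro _ ⟨p, -, rfl⟩
    exact p.property
  · rintro _ ⟨p, hp, rfl⟩ q hq hpq
    exact ⟨⟨q, hq⟩, I.lower hpq hp, rfl⟩
  · rintro _ ⟨p, hp, rfl⟩ _ ⟨q, hq, rfl⟩
    obtain ⟨r, hr, hrp, hrq⟩ := I.directed p hp q hq
    exact ⟨r.val, ⟨r, hr, rfl⟩, hrp, hrq⟩

theorem exists_generic {q : ZFSet.{u}} (hq : q ∈ F.P) : ∃ G, F.Generic G ∧ q ∈ G := by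
  let : Encodable {D // D ∈ 𝕄.Cls ∧ DenseIn F.P F.le D} :=
    (𝕄.countable_Cls.mono fun _ h => h.1 :
      {D | D ∈ 𝕄.Cls ∧ DenseIn F.P F.le D}.Countable).toEncodable
  let 𝒟 (D : {D // D ∈ 𝕄.Cls ∧ DenseIn F.P F.le D}) : Order.Cofinal F.Condition :=
    ⟨{p | p.val ∈ D.val}, fun p =>
      let ⟨r, hr, hle⟩ := D.property.2.2 p.val p.property
      ⟨⟨r, D.property.2.1 hr⟩, hr, hle⟩⟩
  refine ⟨_, ⟨isFilterOn_image_val (Order.idealOfCofinals ⟨q, hq⟩ 𝒟), fun D hD hdense => ?_⟩,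
    ⟨q, hq⟩, Order.mem_idealOfCofinals _ _, rfl⟩
  obtain ⟨p, hpD, hpI⟩ := Order.cofinal_meets_idealOfCofinals ⟨q, hq⟩ 𝒟 ⟨D, hD, hdense⟩
  exact ⟨p.val, ⟨p, hpI, rfl⟩, hpD⟩

end ClassForcing

end Names

/-! ### The conditions of the product -/

section Conditions

variable {𝕄 : GBModel.{u}}

namespace Elem

theorem forall_mem_val {a : Elem 𝕄} {P : ZFSet.{u} → Prop} :
    (∀ x, x ∈ a.val → P x) ↔ ∀ x ∈ a, P x.val :=
  ⟨fun h x hx => h x.val hx, fun h _ hx => h (a.ofMem hx) hx⟩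

theorem pair_val_mem {a x y : Elem 𝕄} : x.val.pair y.val ∈ a.val ↔ pair x y ∈ a := by
  rw [mem_def, pair_val]

/-- `f` is a functional relation: no `x` is related to two different sets. -/
def Functional (f : Elem 𝕄) : Prop := ∀ x y z, pair x y ∈ f → pair x z ∈ f → y = z

theorem functional_iff {f : Elem 𝕄} :
    f.Functional ↔ ∀ x y z : ZFSet.{u}, x.pair y ∈ f.val → x.pair z ∈ f.val → y = z := by
  constructor
  · intro hf x y z hxy hxz
    obtain ⟨x, y, rfl, rfl, hy⟩ := exists_pair_mem_of_pair_mem hxy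
    obtain ⟨_, z, hx, rfl, hz⟩ := exists_pair_mem_of_pair_mem hxz
    exact congrArg val (hf x y z hy (val_inj.1 hx ▸ hz))
  · exact fun hf x y z hy hz => val_inj.1 (hf _ _ _ (pair_val_mem.2 hy) (pair_val_mem.2 hz))

theorem exists_eq_pair_val_iff {a x : Elem 𝕄} (hx : x ∈ a) {P : ZFSet.{u} → ZFSet.{u} → Prop} :
    (∃ y z, x.val = y.pair z ∧ P y z) ↔ ∃ y z : Elem 𝕄, x = pair y z ∧ P y.val z.val := by
  constructor
  · rintro ⟨y, z, e, h⟩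
    obtain ⟨y, z, rfl, rfl, -⟩ := exists_pair_mem_of_pair_mem (a := a) (e ▸ hx : y.pair z ∈ a.val)
    exact ⟨y, z, val_inj.1 (e.trans (pair_val y z).symm), h⟩
  · rintro ⟨y, z, rfl, h⟩
    exact ⟨y.val, z.val, pair_val y z, h⟩

theorem Functional.zapp_val {f x y : Elem 𝕄} (hf : f.Functional) (h : pair x y ∈ f) :
    zapp f.val x.val = y.val := by
  have hex : ∃ b, x.val.pair b ∈ f.val := ⟨y.val, pair_val_mem.2 h⟩
  rw [zapp, dif_pos hex]
  exact functional_iff.1 hf _ _ _ hex.choose_spec (pair_val_mem.2 h)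

end Elem

/-- The finite sequence `⟨f 0, …, f (n - 1)⟩`. -/
def seq (f : ℕ → Elem 𝕄) : ℕ → Elem 𝕄
  | 0 => ∅
  | n + 1 => seq f n ∪ {Elem.pair (numeral n) (f n)}

section Sequences

variable {f g : ℕ → Elem 𝕄} {m n : ℕ}

theorem mem_seq {x : Elem 𝕄} : x ∈ seq f n ↔ ∃ m < n, x = Elem.pair (numeral m) (f m) := by
  induction n with
  | zero => simpa [seq] using Elem.notMem_empty x
  | succ n ih => rw [seq, Elem.mem_union, ih, Elem.mem_singleton, Nat.exists_lt_succ_right]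

theorem pair_mem_seq {a b : Elem 𝕄} :
    Elem.pair a b ∈ seq f n ↔ ∃ m < n, a = numeral m ∧ b = f m := by
  simp only [mem_seq, Elem.pair_inj]

theorem pair_numeral_mem_seq {b : Elem 𝕄} :
    Elem.pair (numeral m) b ∈ seq f n ↔ m < n ∧ b = f m := by
  simp [pair_mem_seq, numeral_injective.eq_iff]

theorem seq_functional (f : ℕ → Elem 𝕄) (n : ℕ) : (seq f n).Functional := by
  intro x y z hy hz
  obtain ⟨m, -, rfl, rfl⟩ := pair_mem_seq.1 hy
  exact (pair_numeral_mem_seq.1 hz).2.symm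

theorem zapp_seq (h : m < n) : zapp (seq f n).val (numeral m : Elem 𝕄).val = (f m).val :=
  (seq_functional f n).zapp_val (pair_numeral_mem_seq.2 ⟨h, rfl⟩)

theorem pdom_seq (f : ℕ → Elem 𝕄) (n : ℕ) : pdom (seq f n).val = (numeral n : Elem 𝕄).val := by
  ext a
  constructor
  · rintro ⟨b, hb⟩
    obtain ⟨a, b, rfl, rfl, h⟩ := Elem.exists_pair_mem_of_pair_mem hb
    obtain ⟨m, hm, rfl, -⟩ := pair_mem_seq.1 h
    exact mem_numeral.2 ⟨m, hm, rfl⟩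
  · intro ha
    obtain ⟨m, hm, e⟩ := mem_numeral.1 (show (numeral n).ofMem ha ∈ numeral n from ha)
    obtain rfl : a = (numeral m : Elem 𝕄).val := congrArg Elem.val e
    exact ⟨(f m).val, Elem.pair_val_mem.2 (pair_numeral_mem_seq.2 ⟨hm, rfl⟩)⟩

theorem forall_mem_numeral {P : Elem 𝕄 → Prop} :
    (∀ x ∈ (numeral n : Elem 𝕄), P x) ↔ ∀ i < n, P (numeral i) := by
  simp only [mem_numeral, forall_exists_index, and_imp]
  exact ⟨fun h i hi => h _ i hi rfl, fun h x i hi e => e ▸ h i hi⟩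

theorem numeral_subset_numeral_iff :
    (∀ x ∈ (numeral m : Elem 𝕄), x ∈ (numeral n : Elem 𝕄)) ↔ m ≤ n := by
  rw [forall_mem_numeral]
  simp only [mem_numeral, numeral_injective.eq_iff, exists_eq_right']
  exact ⟨fun h => not_lt.1 fun hlt => lt_irrefl _ (h n hlt), fun h i hi => hi.trans_le h⟩

theorem qle_seq_iff :
    QLe (seq f n).val (seq g m).val ↔ m ≤ n ∧ ∀ i < m, ∀ x ∈ g i, x ∈ f i := by
  rw [QLe, pdom_seq, pdom_seq]
  refine (and_congr_left' (Elem.forall_mem_val.trans numeral_subset_numeral_iff)).trans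
    (and_congr_right fun hle => ?_)
  refine (Elem.forall_mem_val.trans forall_mem_numeral).trans (forall₂_congr fun i hi => ?_)
  rw [zapp_seq hi, zapp_seq (hi.trans_le hle)]
  exact Elem.forall_mem_val

theorem zfuncOn_numeral_iff {s : Elem 𝕄} :
    ZFuncOn s.val (numeral n : Elem 𝕄).val ↔ ∃ f, s = seq f n := by
  constructor
  · rintro ⟨hpairs, hfun, htotal⟩
    have exists_value (i : ℕ) : ∃ b : Elem 𝕄, i < n → Elem.pair (numeral i) b ∈ s := by
      by_cases hi : i < n
      · obtain ⟨b, hb⟩ := htotal (numeral i : Elem 𝕄).val (mem_numeral.2 ⟨i, hi, rfl⟩)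
        obtain ⟨a, b, ha, rfl, h⟩ := Elem.exists_pair_mem_of_pair_mem hb
        exact ⟨b, fun _ => Elem.val_inj.1 ha ▸ h⟩
      · exact ⟨∅, fun h => absurd h hi⟩
    choose f hf using exists_value
    refine ⟨f, Elem.ext fun x => ⟨fun hx => ?_, fun hx => ?_⟩⟩
    · obtain ⟨a, b, rfl, ha⟩ := (Elem.exists_eq_pair_val_iff hx).1 (hpairs x.val hx)
      obtain ⟨m, hm, rfl⟩ := mem_numeral.1 (show a ∈ numeral n from ha)
      exact pair_numeral_mem_seq.2 ⟨hm, Elem.functional_iff.2 hfun _ _ _ hx (hf m hm)⟩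
    · obtain ⟨m, hm, rfl⟩ := mem_seq.1 hx
      exact hf m hm
  · rintro ⟨f, rfl⟩
    refine ⟨Elem.forall_mem_val.2 fun x hx => (Elem.exists_eq_pair_val_iff hx).2 ?_,
      Elem.functional_iff.1 (seq_functional f n), fun a ha => ?_⟩
    · obtain ⟨m, hm, rfl⟩ := mem_seq.1 hx
      exact ⟨_, _, rfl, mem_numeral.2 ⟨m, hm, rfl⟩⟩
    · exact (pdom_seq f n).ge ha

end Sequences

/-- `p` is a partial function from `ω` to `2`, that is, a condition of `ℙ`. -/
def IsPartialBits (p : Elem 𝕄) : Prop :=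
  (∀ x ∈ p, ∃ a b, x = Elem.pair a b ∧ a ∈ Elem.omega ∧ b ∈ numeral 2) ∧ p.Functional

theorem mem_numeral_two_val {x : ZFSet.{u}} :
    x ∈ (numeral 2 : Elem 𝕄).val ↔ x = ∅ ∨ x = {∅} := by
  change x ∈ ZFSet.sUnion {ZFSet.sUnion {∅, {∅, ∅}},
    {ZFSet.sUnion {∅, {∅, ∅}}, ZFSet.sUnion {∅, {∅, ∅}}}} ↔ _
  simp [show (∅ ∪ {∅} : ZFSet.{u}) = {∅} by ext; simp]

theorem pcond_iff {p : Elem 𝕄} : PCond 𝕄 p.val ↔ IsPartialBits p := by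
  simp only [PCond, p.property, true_and, IsPFunOn, IsPartialBits, Elem.functional_iff,
    Set.mem_ofPred_eq, ← mem_numeral_two_val (𝕄 := 𝕄)]
  exact and_congr_left fun _ => Elem.forall_mem_val.trans <|
    forall₂_congr fun x hx => Elem.exists_eq_pair_val_iff hx

theorem qcond_iff {s : Elem 𝕄} :
    QCond 𝕄 s.val ↔ ∃ (f : ℕ → Elem 𝕄) (n : ℕ), (∀ i < n, IsPartialBits (f i)) ∧ s = seq f n := by
  have cond_iff (f : ℕ → Elem 𝕄) (n : ℕ) :
      (∀ i, i ∈ (numeral n : Elem 𝕄).val → PCond 𝕄 (zapp (seq f n).val i)) ↔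
        ∀ i < n, IsPartialBits (f i) := by
    rw [Elem.forall_mem_val, forall_mem_numeral]
    exact forall₂_congr fun i hi => by rw [zapp_seq hi, pcond_iff]
  constructor
  · rintro ⟨-, n, hn, hs, hcond⟩
    obtain ⟨n, e⟩ := mem_omega.1 (show Elem.omega.ofMem hn ∈ (Elem.omega : Elem 𝕄) from hn)
    obtain rfl : _ = (numeral n : Elem 𝕄).val := congrArg Elem.val e
    obtain ⟨f, rfl⟩ := zfuncOn_numeral_iff.1 hs
    exact ⟨f, n, (cond_iff f n).1 hcond, rfl⟩
  · rintro ⟨f, n, hf, rfl⟩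
    exact ⟨(seq f n).property, (numeral n : Elem 𝕄).val, numeral_mem_omega n,
      zfuncOn_numeral_iff.2 ⟨f, rfl⟩, (cond_iff f n).2 hf⟩

/-- `F` is the finite support product `ℚ` of `ω` copies of `ℙ`. -/
structure IsProductForcing (F : ClassForcing 𝕄) : Prop where
  conditions : F.P = {s : ZFSet | QCond 𝕄 s}
  le_iff_qle : ∀ s' ∈ F.P, ∀ s ∈ F.P, (F.le s' s ↔ QLe s' s)

namespace IsProductForcing

variable {F : ClassForcing 𝕄} {f g : ℕ → Elem 𝕄} {m n : ℕ}

theorem mem_iff (hF : IsProductForcing F) {s : Elem 𝕄} :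
    s.val ∈ F.P ↔ ∃ (f : ℕ → Elem 𝕄) (n : ℕ), (∀ i < n, IsPartialBits (f i)) ∧ s = seq f n := by
  rw [hF.conditions]
  exact qcond_iff

theorem seq_mem (hF : IsProductForcing F) (hf : ∀ i < n, IsPartialBits (f i)) :
    (seq f n).val ∈ F.P :=
  hF.mem_iff.2 ⟨f, n, hf, rfl⟩

theorem seq_le_iff (hF : IsProductForcing F) (hf : ∀ i < n, IsPartialBits (f i))
    (hg : ∀ i < m, IsPartialBits (g i)) :
    F.le (seq f n).val (seq g m).val ↔ m ≤ n ∧ ∀ i < m, ∀ x ∈ g i, x ∈ f i := by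
  rw [hF.le_iff_qle _ (hF.seq_mem hf) _ (hF.seq_mem hg), qle_seq_iff]

end IsProductForcing

end Conditions

/-! ### The generic reals -/

section GenericReals

variable {𝕄 : GBModel.{u}} {s t : Env 𝕄 → Elem 𝕄}

theorem mem_numeral_two {x : Elem 𝕄} :
    x ∈ (numeral 2 : Elem 𝕄) ↔ x = numeral 0 ∨ x = numeral 1 := by
  rw [mem_numeral, Nat.exists_lt_succ_right, Nat.exists_lt_succ_right]
  simp

theorem definableTerm_pair_ite_mem : DefinableTerm (𝕄 := 𝕄)
    fun v => Elem.pair (v 0) (if v 0 ∈ v 1 then numeral 1 else numeral 0) :=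
  (DefinableTerm.var 0).pair (.ite (.mem 0 1) (.const _) (.const _))

/-- The characteristic function of `r` on `ω`. -/
def charFun (r : Elem 𝕄) : Elem 𝕄 := definableTerm_pair_ite_mem.image Elem.omega fun _ => r

theorem mem_charFun {r x : Elem 𝕄} : x ∈ charFun r ↔
    ∃ a ∈ Elem.omega, x = Elem.pair a (if a ∈ r then numeral 1 else numeral 0) :=
  definableTerm_pair_ite_mem.mem_image

theorem pair_numeral_mem_charFun {r b : Elem 𝕄} {n : ℕ} : Elem.pair (numeral n) b ∈ charFun r ↔
    b = if numeral n ∈ r then numeral 1 else numeral 0 := by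
  rw [mem_charFun]
  constructor
  · rintro ⟨a, -, e⟩
    obtain ⟨rfl, rfl⟩ := Elem.pair_inj.1 e
    rfl
  · rintro rfl
    exact ⟨_, numeral_mem_omega n, rfl⟩

theorem numeral_one_ne_numeral_zero : (numeral 1 : Elem 𝕄) ≠ numeral 0 :=
  numeral_injective.ne one_ne_zero

theorem pair_one_mem_charFun {r : Elem 𝕄} {n : ℕ} :
    Elem.pair (numeral n) (numeral 1) ∈ charFun r ↔ numeral n ∈ r := by
  rw [pair_numeral_mem_charFun]
  split_ifs with h <;> simp [h, numeral_one_ne_numeral_zero]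

theorem pair_zero_mem_charFun {r : Elem 𝕄} {n : ℕ} :
    Elem.pair (numeral n) (numeral 0) ∈ charFun r ↔ numeral n ∉ r := by
  rw [pair_numeral_mem_charFun]
  split_ifs with h <;> simp [h, numeral_one_ne_numeral_zero.symm]

theorem isPartialBits_charFun (r : Elem 𝕄) : IsPartialBits (charFun r) := by
  constructor
  · intro x hx
    obtain ⟨a, ha, rfl⟩ := mem_charFun.1 hx
    refine ⟨a, _, rfl, ha, mem_numeral_two.2 ?_⟩
    split_ifs
    exacts [.inr rfl, .inl rfl]
  · intro x y z hy hz
    obtain ⟨a, ha, e⟩ := mem_charFun.1 hy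
    obtain ⟨rfl, rfl⟩ := Elem.pair_inj.1 e
    obtain ⟨n, rfl⟩ := mem_omega.1 ha
    exact (pair_numeral_mem_charFun.1 hz).symm

theorem IsPartialBits.exists_subset_charFun {p : Elem 𝕄} (hp : IsPartialBits p) :
    ∃ r, ∀ x ∈ p, x ∈ charFun r := by
  have hdef : Definable 𝕄 fun v => Elem.pair (v 0) (numeral 1) ∈ v 1 :=
    .mem_terms ((DefinableTerm.var 0).pair (.const _)) (.var 1)
  obtain ⟨r, hr⟩ := hdef.exists_sep (fun _ => p) Elem.omega
  refine ⟨r, fun x hx => ?_⟩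
  obtain ⟨a, b, rfl, ha, hb⟩ := hp.1 x hx
  obtain ⟨n, rfl⟩ := mem_omega.1 ha
  obtain rfl | rfl := mem_numeral_two.1 hb
  · rw [pair_zero_mem_charFun, hr]
    exact fun h => numeral_one_ne_numeral_zero (hp.2 _ _ _ h.2 hx)
  · rw [pair_one_mem_charFun, hr]
    exact ⟨ha, hx⟩

theorem DefinableTerm.charFun (hs : DefinableTerm s) : DefinableTerm fun v => charFun (s v) :=
  comp₁ (f := CF.charFun) (of_mem_iff (fun _ _ => mem_charFun)
    (.ex ((Definable.mem_terms (var 0) (const _)).and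
      (.eq_terms (var 1) ((var 0).pair (.ite (.mem 0 2) (const _) (const _))))))) hs

theorem definableTerm_pair_ite_eq : DefinableTerm (𝕄 := 𝕄)
    fun v => Elem.pair (v 0) (if v 0 = v 1 then {Elem.pair (v 2) (numeral 1)} else ∅) :=
  have hpair := (DefinableTerm.var 2).pair (.const (numeral 1))
  (DefinableTerm.var 0).pair (.ite (.eq 0 1) (hpair.upair hpair) (.const _))

/-- The condition `⟨∅, …, ∅, {⟨n, 1⟩}⟩` of length `k + 1`, which forces that `n` belongs to the
`k`-th generic real. -/
def bitCond (k n : Elem 𝕄) : Elem 𝕄 :=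
  definableTerm_pair_ite_eq.image (k ∪ {k}) (scons k fun _ => n)

theorem mem_bitCond {k n x : Elem 𝕄} : x ∈ bitCond k n ↔
    ∃ i ∈ k ∪ {k}, x = Elem.pair i (if i = k then {Elem.pair n (numeral 1)} else ∅) :=
  definableTerm_pair_ite_eq.mem_image

theorem DefinableTerm.bitCond (hs : DefinableTerm s) (ht : DefinableTerm t) :
    DefinableTerm fun v => bitCond (s v) (t v) :=
  comp₂ (f := CF.bitCond) (of_mem_iff (fun _ _ => mem_bitCond)
    (.ex ((Definable.mem_terms (var 0) ((var 2).union ((var 2).upair (var 2)))).and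
      (.eq_terms (var 1) (definableTerm_pair_ite_eq.rename (scons 0 (scons 2 fun _ => 3))))))) hs ht

theorem bitCond_numeral (k n : ℕ) : (bitCond (numeral k) (numeral n) : Elem 𝕄) =
    seq (fun i => if i = k then {Elem.pair (numeral n) (numeral 1)} else ∅) (k + 1) := by
  ext x
  rw [mem_bitCond, mem_seq, show (numeral k ∪ {numeral k} : Elem 𝕄) = numeral (k + 1) from rfl]
  simp only [mem_numeral]
  constructor
  · rintro ⟨_, ⟨i, hi, rfl⟩, rfl⟩
    exact ⟨i, hi, by simp only [numeral_injective.eq_iff]⟩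
  · rintro ⟨i, hi, rfl⟩
    exact ⟨_, ⟨i, hi, rfl⟩, by simp only [numeral_injective.eq_iff]⟩

theorem isPartialBits_bit (k n i : ℕ) : IsPartialBits (𝕄 := 𝕄)
    (if i = k then {Elem.pair (numeral n) (numeral 1)} else ∅) := by
  split_ifs
  · refine ⟨fun x hx => ⟨_, _, Elem.mem_singleton.1 hx, numeral_mem_omega n,
      mem_numeral_two.2 (.inr rfl)⟩, fun x y z hy hz => ?_⟩
    rw [Elem.mem_singleton, Elem.pair_inj] at hy hz
    exact hy.2.trans hz.2.symm
  · exact ⟨fun x hx => absurd hx (Elem.notMem_empty x),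
      fun x y _ hy => absurd hy (Elem.notMem_empty _)⟩

/-- `n` belongs to the `k`-th generic real. -/
def GenericBit (𝕄 : GBModel.{u}) (G : Set ZFSet.{u}) (k n : ℕ) : Prop :=
  (bitCond (numeral k : Elem 𝕄) (numeral n)).val ∈ G

/-- `r` is the `k`-th generic real. -/
def IsGenericReal (G : Set ZFSet.{u}) (k : ℕ) (r : Elem 𝕄) : Prop :=
  ∀ n, GenericBit 𝕄 G k n ↔ numeral n ∈ r

variable {F : ClassForcing 𝕄} {G : Set ZFSet.{u}}

theorem ClassForcing.Generic.exists_mem (hG : F.Generic G) {P : Env 𝕄 → Prop}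
    (hP : Definable 𝕄 P) (v : Env 𝕄)
    (hdense : ∀ q : Elem 𝕄, q.val ∈ F.P →
      ∃ q' : Elem 𝕄, q'.val ∈ F.P ∧ F.le q'.val q.val ∧ P (scons q' v)) :
    ∃ q : Elem 𝕄, q.val ∈ G ∧ P (scons q v) := by
  obtain ⟨q, hqG, hqM, hq, -⟩ := hG.2 _ ((hP.and (.cls _ F.P_cls 0)).mem_cls v)
    ⟨fun q ⟨_, _, hqP⟩ => hqP, fun q hq => by
      obtain ⟨q', hq'P, hle, hq'⟩ := hdense ⟨q, 𝕄.classes_sub _ F.P_cls hq⟩ hq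
      exact ⟨q'.val, ⟨q'.property, hq', hq'P⟩, hle⟩⟩
  exact ⟨⟨q, hqM⟩, hqG, hq⟩

namespace IsProductForcing

variable {f : ℕ → Elem 𝕄} {k n N : ℕ} {r : Elem 𝕄}

theorem bitCond_mem (hF : IsProductForcing F) (k n : ℕ) :
    (bitCond (numeral k : Elem 𝕄) (numeral n)).val ∈ F.P := by
  rw [bitCond_numeral]
  exact hF.seq_mem fun i _ => isPartialBits_bit k n i

theorem seq_le_bitCond_iff (hF : IsProductForcing F) (hf : ∀ i < N, IsPartialBits (f i)) :
    F.le (seq f N).val (bitCond (numeral k : Elem 𝕄) (numeral n)).val ↔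
      k < N ∧ Elem.pair (numeral n) (numeral 1) ∈ f k := by
  rw [bitCond_numeral, hF.seq_le_iff hf fun i _ => isPartialBits_bit k n i, Nat.succ_le_iff]
  refine and_congr_right fun _ => ⟨fun h => h k k.lt_succ_self _ ?_, fun h i _ x hx => ?_⟩
  · rw [if_pos rfl, Elem.mem_singleton]
  · split_ifs at hx with hik
    · rwa [Elem.mem_singleton.1 hx, hik]
    · exact absurd hx (Elem.notMem_empty x)

theorem exists_eq_seq_val (hF : IsProductForcing F) {q : ZFSet.{u}} (hq : q ∈ F.P) :
    ∃ (f : ℕ → Elem 𝕄) (n : ℕ), (∀ i < n, IsPartialBits (f i)) ∧ q = (seq f n).val := by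
  obtain ⟨f, n, hf, e⟩ := (hF.mem_iff (s := ⟨q, 𝕄.classes_sub _ F.P_cls hq⟩)).1 hq
  exact ⟨f, n, hf, congrArg Elem.val e⟩

theorem isGenericReal_of_pair_mem (hF : IsProductForcing F) (hG : F.Generic G) {q : Elem 𝕄}
    (hq : q.val ∈ G) (h : Elem.pair (numeral k) (charFun r) ∈ q) : IsGenericReal G k r := by
  obtain ⟨⟨hsub, -, hup, hdir⟩, -⟩ := hG
  obtain ⟨f, N, hf, rfl⟩ := hF.mem_iff.1 (hsub hq)
  obtain ⟨hk, hr⟩ := pair_numeral_mem_seq.1 h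
  intro n
  constructor
  · intro hbit
    obtain ⟨c, hc, hcq, hcbit⟩ := hdir _ hq _ hbit
    obtain ⟨g, L, hg, rfl⟩ := hF.exists_eq_seq_val (hsub hc)
    obtain ⟨hkL, hone⟩ := (hF.seq_le_bitCond_iff hg).1 hcbit
    by_contra hn
    have hzero := ((hF.seq_le_iff hg hf).1 hcq).2 k hk _ (hr ▸ pair_zero_mem_charFun.2 hn)
    exact numeral_one_ne_numeral_zero ((hg k hkL).2 _ _ _ hone hzero)
  · exact fun hn => hup _ hq _ (hF.bitCond_mem k n)
      ((hF.seq_le_bitCond_iff hf).2 ⟨hk, hr ▸ pair_one_mem_charFun.2 hn⟩)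

theorem exists_le_charFun_mem (hF : IsProductForcing F) {q : Elem 𝕄} (hq : q.val ∈ F.P) (k : ℕ)
    (r : Elem 𝕄) : ∃ q' : Elem 𝕄, q'.val ∈ F.P ∧ F.le q'.val q.val ∧
      (∃ c, Elem.pair (numeral k) (charFun c) ∈ q') ∧
      ∃ m, Elem.pair (numeral m) (charFun r) ∈ q' := by
  obtain ⟨f, N, hf, rfl⟩ := hF.mem_iff.1 hq
  have exists_charFun (i : ℕ) :
      ∃ c, (i < N → ∀ x ∈ f i, x ∈ charFun c) ∧ (N ≤ i → c = r) := by
    obtain hi | hi := lt_or_ge i N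
    · obtain ⟨c, hc⟩ := (hf i hi).exists_subset_charFun
      exact ⟨c, fun _ => hc, fun h => absurd hi h.not_gt⟩
    · exact ⟨r, fun h => absurd h hi.not_gt, fun _ => rfl⟩
  choose c hc hcr using exists_charFun
  have hg : ∀ i < N + k + 1, IsPartialBits (charFun (c i)) := fun i _ => isPartialBits_charFun _
  exact ⟨seq (fun i => charFun (c i)) (N + k + 1), hF.seq_mem hg,
    (hF.seq_le_iff hg hf).2 ⟨by omega, hc⟩,
    ⟨c k, pair_numeral_mem_seq.2 ⟨by omega, rfl⟩⟩,
    ⟨N, pair_numeral_mem_seq.2 ⟨by omega, by rw [hcr N le_rfl]⟩⟩⟩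

theorem exists_isGenericReal (hF : IsProductForcing F) (hG : F.Generic G) (k : ℕ) :
    ∃ r : Elem 𝕄, IsGenericReal G k r := by
  have hdef : Definable 𝕄 fun v => ∃ r, Elem.pair (numeral k) (charFun r) ∈ v 0 :=
    .ex (.mem_terms ((DefinableTerm.const _).pair (DefinableTerm.var 0).charFun) (.var 1))
  obtain ⟨q, hq, r, h⟩ := hG.exists_mem hdef (fun _ => ∅) fun q hq => by
    obtain ⟨q', hq', hle, hk, -⟩ := hF.exists_le_charFun_mem hq k ∅
    exact ⟨q', hq', hle, hk⟩
  exact ⟨r, hF.isGenericReal_of_pair_mem hG hq h⟩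

theorem exists_index_isGenericReal (hF : IsProductForcing F) (hG : F.Generic G) (r : Elem 𝕄) :
    ∃ k, IsGenericReal G k r := by
  have hdef : Definable 𝕄 fun v => ∃ m, m ∈ Elem.omega ∧ Elem.pair m (charFun (v 1)) ∈ v 0 :=
    .ex (.and (.mem_terms (.var 0) (.const _))
      (.mem_terms ((DefinableTerm.var 0).pair (DefinableTerm.var 2).charFun) (.var 1)))
  obtain ⟨q, hq, m, hm, h⟩ := hG.exists_mem hdef (fun _ => r) fun q hq => by
    obtain ⟨q', hq', hle, -, m, hm⟩ := hF.exists_le_charFun_mem hq 0 r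
    exact ⟨q', hq', hle, numeral m, numeral_mem_omega m, hm⟩
  obtain ⟨k, rfl⟩ := mem_omega.1 hm
  exact ⟨k, hF.isGenericReal_of_pair_mem hG hq h⟩

end IsProductForcing

end GenericReals

/-! ### Statements about the generic reals as equalities of names -/

section Expressibility

variable {𝕄 : GBModel.{u}} {F : ClassForcing 𝕄} {G : Set ZFSet.{u}} {σ τ p : Elem 𝕄}
  {s t : Env 𝕄 → Elem 𝕄} {z : ZFSet.{u}} {v : ℕ → ℕ}

namespace ClassForcing

/-- The canonical name for the unordered pair of the values of `σ` and `τ`. -/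
def pairName (F : ClassForcing 𝕄) (σ τ : Elem 𝕄) : Elem 𝕄 :=
  Elem.upair (Elem.pair σ F.top) (Elem.pair τ F.top)

theorem Generic.mem_eval_pairName (hG : F.Generic G) :
    z ∈ (F.pairName σ τ).eval G ↔ z = σ.eval G ∨ z = τ.eval G := by
  simp only [Elem.mem_eval, pairName, Elem.mem_upair, Elem.pair_inj]
  constructor
  · rintro ⟨_, _, ⟨rfl, -⟩ | ⟨rfl, -⟩, -, e⟩
    exacts [.inl e, .inr e]
  · rintro (e | e)
    exacts [⟨σ, F.top, .inl ⟨rfl, rfl⟩, hG.top_mem, e⟩, ⟨τ, F.top, .inr ⟨rfl, rfl⟩, hG.top_mem, e⟩]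

theorem Generic.eval_eq_of_eval_pairName_eq (hG : F.Generic G) {ρ : Elem 𝕄}
    (h : (F.pairName σ τ).eval G = (F.pairName ρ ρ).eval G) : σ.eval G = τ.eval G := by
  have hσ := hG.mem_eval_pairName.1 (h ▸ hG.mem_eval_pairName.2 (.inl rfl) : σ.eval G ∈ _)
  have hτ := hG.mem_eval_pairName.1 (h ▸ hG.mem_eval_pairName.2 (.inr rfl) : τ.eval G ∈ _)
  rw [or_self] at hσ hτ
  rw [hσ, hτ]

theorem Generic.eval_pairName_congr (hG : F.Generic G) {σ' τ' : Elem 𝕄}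
    (hσ : σ.eval G = σ'.eval G) (hτ : τ.eval G = τ'.eval G) :
    (F.pairName σ τ).eval G = (F.pairName σ' τ').eval G := by
  ext z
  rw [hG.mem_eval_pairName, hG.mem_eval_pairName, hσ, hτ]

end ClassForcing

theorem Elem.mem_eval_union : z ∈ (σ ∪ τ).eval G ↔ z ∈ σ.eval G ∨ z ∈ τ.eval G := by
  simp only [Elem.mem_eval, Elem.mem_union, or_and_right, exists_or]

theorem ClassForcing.Generic.eval_union_pairName_self_eq_iff (hG : F.Generic G) :
    σ.eval G = (σ ∪ F.pairName τ τ).eval G ↔ τ.eval G ∈ σ.eval G := by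
  constructor
  · exact fun h => h ▸ Elem.mem_eval_union.2 (.inr (hG.mem_eval_pairName.2 (.inl rfl)))
  · intro h
    ext z
    rw [Elem.mem_eval_union, hG.mem_eval_pairName, or_self, iff_self_or]
    rintro rfl
    exact h

theorem Elem.notMem_eval_empty : z ∉ (∅ : Elem 𝕄).eval G := by
  rw [Elem.mem_eval]
  rintro ⟨τ, p, h, -⟩
  exact Elem.notMem_empty _ h

/-- The name `{⟨∅, p⟩}`, whose value is nonempty exactly when `p` is in the generic filter. -/
def indicatorName (p : Elem 𝕄) : Elem 𝕄 := {Elem.pair ∅ p}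

theorem eval_empty_mem_eval_indicatorName :
    (∅ : Elem 𝕄).eval G ∈ (indicatorName p).eval G ↔ p.val ∈ G := by
  simp only [Elem.mem_eval, indicatorName, Elem.mem_singleton, Elem.pair_inj]
  exact ⟨fun ⟨_, _, ⟨_, hp⟩, h, _⟩ => hp ▸ h, fun h => ⟨∅, p, ⟨rfl, rfl⟩, h, rfl⟩⟩

theorem eval_indicatorName_eq_eval_empty :
    (indicatorName p).eval G = (∅ : Elem 𝕄).eval G ↔ p.val ∉ G := by
  refine ⟨fun h hp => ?_, fun h => ?_⟩
  · exact Elem.notMem_eval_empty (h ▸ eval_empty_mem_eval_indicatorName.2 hp)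
  · ext z
    refine iff_of_false (fun hz => h ?_) Elem.notMem_eval_empty
    obtain ⟨_, q, hq, hqG, -⟩ := Elem.mem_eval.1 hz
    rwa [(Elem.pair_inj.1 (Elem.mem_singleton.1 hq)).2] at hqG

/-- The assignment of the numerals of `v`. -/
def numeralEnv (v : ℕ → ℕ) : Env 𝕄 := fun n => numeral (v n)

theorem scons_numeralEnv (i : ℕ) (v : ℕ → ℕ) :
    scons (numeral i) (numeralEnv v) = (numeralEnv (scons i v) : Env 𝕄) := by
  funext n
  cases n <;> rfl

/-- The canonical name for the set of the values of `t (i, v)` for `i ∈ ω`. -/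
def ClassForcing.familyName (F : ClassForcing 𝕄) (ht : DefinableTerm t) (v : Env 𝕄) : Elem 𝕄 :=
  (ht.pair (.const F.top)).image Elem.omega v

theorem ClassForcing.mem_familyName_numeralEnv {ht : DefinableTerm t} {x : Elem 𝕄} :
    x ∈ F.familyName ht (numeralEnv v) ↔
      ∃ i, x = Elem.pair (t (numeralEnv (scons i v))) F.top := by
  rw [familyName, DefinableTerm.mem_image]
  constructor
  · rintro ⟨y, hy, e⟩
    obtain ⟨i, rfl⟩ := mem_omega.1 hy
    exact ⟨i, by rwa [scons_numeralEnv] at e⟩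
  · rintro ⟨i, e⟩
    exact ⟨numeral i, numeral_mem_omega i, by rwa [scons_numeralEnv]⟩

theorem ClassForcing.Generic.mem_eval_familyName (hG : F.Generic G) {ht : DefinableTerm t} :
    z ∈ (F.familyName ht (numeralEnv v)).eval G ↔
      ∃ i, z = (t (numeralEnv (scons i v))).eval G := by
  simp only [Elem.mem_eval, mem_familyName_numeralEnv, Elem.pair_inj]
  constructor
  · rintro ⟨_, _, ⟨i, rfl, -⟩, -, e⟩
    exact ⟨i, e⟩
  · rintro ⟨i, e⟩
    exact ⟨_, _, ⟨i, rfl, rfl⟩, hG.top_mem, e⟩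

/-- `t` is definable and takes numerals to names. -/
structure IsNameTerm (F : ClassForcing 𝕄) (t : Env 𝕄 → Elem 𝕄) : Prop where
  definable : DefinableTerm t
  name : ∀ v, F.Name (t (numeralEnv v))

namespace IsNameTerm

theorem empty : IsNameTerm F fun _ => ∅ :=
  ⟨.const _, fun _ => ClassForcing.name_iff.2 fun x hx => absurd hx (Elem.notMem_empty x)⟩

theorem pairName (hs : IsNameTerm F s) (ht : IsNameTerm F t) :
    IsNameTerm F fun v => F.pairName (s v) (t v) := by
  refine ⟨(hs.definable.pair (.const _)).upair (ht.definable.pair (.const _)), fun v => ?_⟩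
  rw [ClassForcing.name_iff]
  intro x hx
  obtain rfl | rfl := Elem.mem_upair.1 hx
  exacts [⟨_, _, rfl, F.one_mem, hs.name v⟩, ⟨_, _, rfl, F.one_mem, ht.name v⟩]

theorem union (hs : IsNameTerm F s) (ht : IsNameTerm F t) : IsNameTerm F fun v => s v ∪ t v :=
  ⟨hs.definable.union ht.definable, fun v => ClassForcing.name_iff.2 fun x hx =>
    (Elem.mem_union.1 hx).elim (ClassForcing.name_iff.1 (hs.name v) x)
      (ClassForcing.name_iff.1 (ht.name v) x)⟩

theorem familyName (ht : IsNameTerm F t) : IsNameTerm F (F.familyName ht.definable) := by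
  refine ⟨(ht.definable.pair (.const _)).image_definable (.const _), fun v => ?_⟩
  rw [ClassForcing.name_iff]
  intro x hx
  obtain ⟨i, rfl⟩ := ClassForcing.mem_familyName_numeralEnv.1 hx
  exact ⟨_, _, rfl, F.one_mem, ht.name _⟩

theorem indicatorName (ht : DefinableTerm t) (hP : ∀ v, (t (numeralEnv v)).val ∈ F.P) :
    IsNameTerm F fun v => indicatorName (t v) := by
  have hpair := (DefinableTerm.const ∅).pair ht
  refine ⟨hpair.upair hpair, fun v => ClassForcing.name_iff.2 fun x hx => ?_⟩
  exact ⟨_, _, Elem.mem_singleton.1 hx, hP v, empty.name v⟩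

theorem ite {P : Env 𝕄 → Prop} (hP : Definable 𝕄 P) (hs : IsNameTerm F s) (ht : IsNameTerm F t) :
    IsNameTerm F fun v => if P v then s v else t v := by
  refine ⟨.ite hP hs.definable ht.definable, fun v => ?_⟩
  split_ifs
  exacts [hs.name v, ht.name v]

theorem rename (ht : IsNameTerm F t) (g : ℕ → ℕ) : IsNameTerm F fun v => t fun n => v (g n) :=
  ⟨ht.definable.rename g, fun v => ht.name fun n => v (g n)⟩

end IsNameTerm

/-- The relation `A` between generic filters and natural numbers is expressed by an equality of
names that are definable from the natural numbers. -/
def ExpressibleByEq (F : ClassForcing 𝕄) (A : Set ZFSet.{u} → (ℕ → ℕ) → Prop) : Prop :=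
  ∃ α β, IsNameTerm F α ∧ IsNameTerm F β ∧ ∀ G, F.Generic G → ∀ v,
    (A G v ↔ (α (numeralEnv v)).eval G = (β (numeralEnv v)).eval G)

/-- The relation `D` between natural numbers is definable over the model. -/
def DefinableOnNumerals (𝕄 : GBModel.{u}) (D : (ℕ → ℕ) → Prop) : Prop :=
  ∃ P, Definable 𝕄 P ∧ ∀ v, D v ↔ P (numeralEnv v)

variable {A B : Set ZFSet.{u} → (ℕ → ℕ) → Prop} {D : (ℕ → ℕ) → Prop}

namespace ExpressibleByEq

theorem congr (h : ∀ G, F.Generic G → ∀ v, A G v ↔ B G v) (hA : ExpressibleByEq F A) :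
    ExpressibleByEq F B := by
  obtain ⟨α, β, hα, hβ, hA⟩ := hA
  exact ⟨α, β, hα, hβ, fun G hG v => (h G hG v).symm.trans (hA G hG v)⟩

theorem rename (hA : ExpressibleByEq F A) (g : ℕ → ℕ) :
    ExpressibleByEq F fun G v => A G fun n => v (g n) := by
  obtain ⟨α, β, hα, hβ, hA⟩ := hA
  exact ⟨_, _, hα.rename g, hβ.rename g, fun G hG v => hA G hG fun n => v (g n)⟩

theorem of_mem (hs : IsNameTerm F s) (ht : IsNameTerm F t) :
    ExpressibleByEq F fun G v => (s (numeralEnv v)).eval G ∈ (t (numeralEnv v)).eval G :=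
  ⟨_, _, ht, ht.union (hs.pairName hs), fun _ hG _ => hG.eval_union_pairName_self_eq_iff.symm⟩

theorem all (hA : ExpressibleByEq F A) : ExpressibleByEq F fun G v => ∀ i, A G (scons i v) := by
  obtain ⟨α, β, hα, hβ, hA⟩ := hA
  refine ⟨_, _, (hα.pairName hα).familyName, (hα.pairName hβ).familyName, fun G hG v => ?_⟩
  simp only [hA G hG]
  constructor
  · intro h
    ext z
    simp only [hG.mem_eval_familyName, hG.eval_pairName_congr rfl (h _)]
  · intro h i
    obtain ⟨j, hj⟩ := hG.mem_eval_familyName.1 (h.ge (hG.mem_eval_familyName.2 ⟨i, rfl⟩))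
    exact hG.eval_eq_of_eval_pairName_eq hj

/- With `D = {{α i} | i ∈ ω}`, we have `α i = β i` iff `{α i, β i} ∈ D` iff
`D = D ∪ {{α i, β i}}`, and in the last equality one side does not depend on `i`. -/
theorem ex (hA : ExpressibleByEq F A) : ExpressibleByEq F fun G v => ∃ i, A G (scons i v) := by
  obtain ⟨α, β, hα, hβ, hA⟩ := hA
  have hD := (hα.pairName hα).familyName
  have hαβ := hα.pairName hβ
  refine (of_mem hD ((hD.rename (· + 1)).union (hαβ.pairName hαβ)).familyName).congr
    fun G hG v => ?_
  rw [hG.mem_eval_familyName]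
  refine exists_congr fun i => ?_
  rw [hA G hG]
  refine hG.eval_union_pairName_self_eq_iff.trans (hG.mem_eval_familyName.trans ⟨?_, fun h => ?_⟩)
  · rintro ⟨j, hj⟩
    exact hG.eval_eq_of_eval_pairName_eq hj
  · exact ⟨i, hG.eval_pairName_congr rfl h.symm⟩

theorem ite [DecidablePred D] (hD : DefinableOnNumerals 𝕄 D) (hA : ExpressibleByEq F A)
    (hB : ExpressibleByEq F B) :
    ExpressibleByEq F fun G v => if D v then A G v else B G v := by
  obtain ⟨α, β, hα, hβ, hA⟩ := hA
  obtain ⟨α', β', hα', hβ', hB⟩ := hB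
  obtain ⟨P, hP, hDP⟩ := hD
  refine ⟨_, _, .ite hP hα hα', .ite hP hβ hβ', fun G hG v => ?_⟩
  simp only [hDP]
  split_ifs
  exacts [hA G hG v, hB G hG v]

theorem mem_filter (ht : DefinableTerm t) (hP : ∀ v, (t (numeralEnv v)).val ∈ F.P) :
    ExpressibleByEq F fun G v => (t (numeralEnv v)).val ∈ G :=
  (of_mem .empty (.indicatorName ht hP)).congr fun _ _ _ => eval_empty_mem_eval_indicatorName

theorem notMem_filter (ht : DefinableTerm t) (hP : ∀ v, (t (numeralEnv v)).val ∈ F.P) :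
    ExpressibleByEq F fun G v => (t (numeralEnv v)).val ∉ G :=
  ⟨_, _, .indicatorName ht hP, .empty, fun _ _ _ => eval_indicatorName_eq_eval_empty.symm⟩

end ExpressibleByEq

/-- The relation `A` and its negation are both expressed by equalities of names. -/
def Expressible (F : ClassForcing 𝕄) (A : Set ZFSet.{u} → (ℕ → ℕ) → Prop) : Prop :=
  ExpressibleByEq F A ∧ ExpressibleByEq F fun G v => ¬ A G v

namespace Expressible

theorem congr (h : ∀ G, F.Generic G → ∀ v, A G v ↔ B G v) (hA : Expressible F A) :
    Expressible F B :=
  ⟨hA.1.congr h, hA.2.congr fun G hG v => not_congr (h G hG v)⟩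

theorem not (hA : Expressible F A) : Expressible F fun G v => ¬ A G v :=
  ⟨hA.2, hA.1.congr fun _ _ _ => not_not.symm⟩

theorem rename (hA : Expressible F A) (g : ℕ → ℕ) : Expressible F fun G v => A G fun n => v (g n) :=
  ⟨hA.1.rename g, hA.2.rename g⟩

theorem ite [DecidablePred D] (hD : DefinableOnNumerals 𝕄 D) (hA : Expressible F A)
    (hB : Expressible F B) : Expressible F fun G v => if D v then A G v else B G v :=
  ⟨.ite hD hA.1 hB.1, (ExpressibleByEq.ite hD hA.2 hB.2).congr fun G _ v => by
    beta_reduce; split_ifs <;> rfl⟩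

theorem ex {A : Set ZFSet.{u} → (ℕ → ℕ) → ℕ → Prop}
    (hA : Expressible F fun G v => A G (fun n => v (n + 1)) (v 0)) :
    Expressible F fun G v => ∃ i, A G v i :=
  ⟨hA.1.ex, hA.2.all.congr fun G _ v => by push Not; rfl⟩

theorem mem_filter (ht : DefinableTerm t) (hP : ∀ v, (t (numeralEnv v)).val ∈ F.P) :
    Expressible F fun G v => (t (numeralEnv v)).val ∈ G :=
  ⟨.mem_filter ht hP, .notMem_filter ht hP⟩

theorem genericBit (hF : IsProductForcing F) (i j : ℕ) :
    Expressible F fun G v => GenericBit 𝕄 G (v i) (v j) :=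
  mem_filter ((DefinableTerm.var i).bitCond (.var j)) fun v => hF.bitCond_mem (v i) (v j)

theorem of_definable (hD : DefinableOnNumerals 𝕄 D) : Expressible F fun _ v => D v := by
  have htrue : Expressible F fun _ _ => True :=
    (mem_filter (.const F.top) fun _ => F.one_mem).congr fun G hG _ => iff_true_intro hG.top_mem
  refine (htrue.ite hD htrue.not).congr fun G _ v => ?_
  split_ifs with h <;> simp [h]

theorem eq (i j : ℕ) : Expressible F fun _ v => v i = v j :=
  of_definable ⟨_, .eq i j, fun _ => numeral_injective.eq_iff.symm⟩

theorem eq_const (i c : ℕ) : Expressible F fun _ v => v i = c :=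
  of_definable ⟨_, .eq_terms (.var i) (.const (numeral c)),
    fun _ => numeral_injective.eq_iff.symm⟩

theorem numeral_mem (i : ℕ) (r : Elem 𝕄) : Expressible F fun _ v => numeral (v i) ∈ r :=
  of_definable ⟨_, .mem_terms (.var i) (.const r), fun _ => Iff.rfl⟩

theorem or (hA : Expressible F A) (hB : Expressible F B) :
    Expressible F fun G v => A G v ∨ B G v := by
  have hzero : DefinableOnNumerals 𝕄 fun v => v 0 = 0 :=
    ⟨_, .eq_terms (.var 0) (.const (numeral 0)), fun v => numeral_injective.eq_iff.symm⟩
  refine (ex (A := fun G v i => if i = 0 then A G v else B G v)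
    (ite hzero (hA.rename (· + 1)) (hB.rename (· + 1)))).congr fun G _ v => ⟨?_, ?_⟩
  · rintro ⟨i, h⟩
    split_ifs at h
    exacts [.inl h, .inr h]
  · rintro (h | h)
    exacts [⟨0, h⟩, ⟨1, h⟩]

theorem and (hA : Expressible F A) (hB : Expressible F B) :
    Expressible F fun G v => A G v ∧ B G v :=
  (hA.not.or hB.not).not.congr fun _ _ _ => by tauto

theorem imp (hA : Expressible F A) (hB : Expressible F B) :
    Expressible F fun G v => A G v → B G v :=
  (hA.not.or hB).congr fun _ _ _ => by tauto

theorem iff (hA : Expressible F A) (hB : Expressible F B) :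
    Expressible F fun G v => A G v ↔ B G v :=
  ((hA.imp hB).and (hB.imp hA)).congr fun _ _ _ => by tauto

theorem all {A : Set ZFSet.{u} → (ℕ → ℕ) → ℕ → Prop}
    (hA : Expressible F fun G v => A G (fun n => v (n + 1)) (v 0)) :
    Expressible F fun G v => ∀ i, A G v i :=
  (ex (A := fun G v i => ¬ A G v i) hA.not).not.congr fun _ _ _ => by push Not; rfl

end Expressible

end Expressibility

/-! ### Coding sets by reals -/

section Coding

variable {𝕄 : GBModel.{u}}

theorem Definable.mem_omega (i : ℕ) : Definable 𝕄 fun v => v i ∈ (Elem.omega : Elem 𝕄) :=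
  mem_terms (.var i) (.const _)

theorem Definable.pair_mem (i j k : ℕ) : Definable 𝕄 fun v => Elem.pair (v i) (v j) ∈ v k :=
  mem_terms ((DefinableTerm.var i).pair (.var j)) (.var k)

/-- `g` is the graph of an injection of `x` into `ω`. -/
structure IsInjectionToOmega (g x : Elem 𝕄) : Prop where
  mem_and_eq_numeral : ∀ {a b}, Elem.pair a b ∈ g → a ∈ x ∧ ∃ n, b = numeral n
  total : ∀ a ∈ x, ∃ n, Elem.pair a (numeral n) ∈ g
  functional : ∀ {a b c}, Elem.pair a b ∈ g → Elem.pair a c ∈ g → b = c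
  injective : ∀ {a b c}, Elem.pair a c ∈ g → Elem.pair b c ∈ g → a = b

theorem AllSetsCountable.exists_isInjectionToOmega (hctbl : AllSetsCountable 𝕄) (x : Elem 𝕄) :
    ∃ g, IsInjectionToOmega g x := by
  obtain ⟨g, hg, hsub, hfun, htotal, hinj⟩ := hctbl x.val x.property
  have mem_and_eq_numeral {a b : Elem 𝕄} (h : Elem.pair a b ∈ (⟨g, hg⟩ : Elem 𝕄)) :
      a ∈ x ∧ ∃ n, b = numeral n := by
    obtain ⟨a', b', e, ha, hb⟩ := hsub _ h
    rw [Elem.pair_val] at e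
    obtain ⟨rfl, rfl⟩ := ZFSet.pair_inj.1 e
    exact ⟨ha, mem_omega.1 hb⟩
  refine ⟨⟨g, hg⟩, mem_and_eq_numeral, fun a ha => ?_, fun hb hc => ?_, fun ha hb => ?_⟩
  · obtain ⟨b, hb⟩ := htotal a.val ha
    obtain ⟨a', b', haa', -, hab⟩ := Elem.exists_pair_mem_of_pair_mem (a := ⟨g, hg⟩) hb
    obtain rfl := Elem.val_inj.1 haa'
    obtain ⟨-, n, rfl⟩ := mem_and_eq_numeral hab
    exact ⟨n, hab⟩
  · rw [Elem.mem_def, Elem.pair_val] at hb hc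
    exact Elem.val_inj.1 (hfun _ _ _ hb hc)
  · rw [Elem.mem_def, Elem.pair_val] at ha hb
    exact Elem.val_inj.1 (hinj _ _ _ ha hb)

/-- `f` is the graph of the injective pairing function `j` on `ω`. -/
structure IsPairing (f : Elem 𝕄) (j : ℕ → ℕ → ℕ) : Prop where
  pair_mem_iff : ∀ {a b y},
    Elem.pair (Elem.pair (numeral a) (numeral b)) y ∈ f ↔ y = numeral (j a b)
  injective : ∀ {a b c d}, j a b = j c d → a = c ∧ b = d

theorem exists_forall_pair_numeral_mem :
    ∃ w : Elem 𝕄, ∀ a b : ℕ, Elem.pair (numeral a) (numeral b) ∈ w := by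
  have hpair : DefinableTerm fun v : Env 𝕄 => Elem.pair (v 1) (v 0) :=
    (DefinableTerm.var 1).pair (.var 0)
  have hrow := hpair.image_definable (.const Elem.omega)
  refine ⟨Elem.sUnion (hrow.image Elem.omega fun _ => ∅), fun a b => ?_⟩
  exact Elem.mem_sUnion.2 ⟨_, hrow.mem_image.2 ⟨numeral a, numeral_mem_omega a, rfl⟩,
    hpair.mem_image.2 ⟨numeral b, numeral_mem_omega b, rfl⟩⟩

theorem AllSetsCountable.exists_isPairing (hctbl : AllSetsCountable 𝕄) :
    ∃ (f : Elem 𝕄) (j : ℕ → ℕ → ℕ), IsPairing f j := by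
  obtain ⟨w, hw⟩ := exists_forall_pair_numeral_mem (𝕄 := 𝕄)
  obtain ⟨f, hf⟩ := hctbl.exists_isInjectionToOmega w
  choose j hj using fun a b => hf.total _ (hw a b)
  refine ⟨f, j, ⟨fun h => hf.functional h (hj _ _), fun h => h ▸ hj _ _⟩, fun {a b c d} h => ?_⟩
  have hpair := hf.injective (hj a b) (h ▸ hj c d)
  exact (Elem.pair_inj.1 hpair).imp (numeral_injective ·) (numeral_injective ·)

/-- The relation on `ω` whose set of pairs, transported along the pairing function `f`, is `r`. -/
def CodedRel (f r a b : Elem 𝕄) : Prop :=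
  a ∈ Elem.omega ∧ b ∈ Elem.omega ∧ ∃ c ∈ r, Elem.pair (Elem.pair a b) c ∈ f

/-- `b` is a bisimulation between `∈` and the relation on `ω` coded by `r`. -/
def IsCodeBisim (f r b : Elem 𝕄) : Prop := ∀ x a, Elem.pair x a ∈ b →
  (∀ c, CodedRel f r c a → ∃ y ∈ x, Elem.pair y c ∈ b) ∧
    ∀ y ∈ x, ∃ c, CodedRel f r c a ∧ Elem.pair y c ∈ b

/-- The Mostowski collapse of the relation coded by `r` takes `a` to `x`. -/
def Decodes (f r a x : Elem 𝕄) : Prop := ∃ b, IsCodeBisim f r b ∧ Elem.pair x a ∈ b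

/-- The model believes the relation coded by `r` to be well-founded. -/
def CodesWellFounded (f r : Elem 𝕄) : Prop := ∀ s : Elem 𝕄, (∃ a ∈ Elem.omega, a ∈ s) →
  ∃ a ∈ Elem.omega, a ∈ s ∧ ∀ c ∈ s, ¬ CodedRel f r c a

namespace Definable

theorem pair_pair_mem (f : Elem 𝕄) (i j k : ℕ) :
    Definable 𝕄 fun v => Elem.pair (Elem.pair (v i) (v j)) (v k) ∈ f :=
  mem_terms (((DefinableTerm.var i).pair (.var j)).pair (.var k)) (.const f)

theorem codedRel (f : Elem 𝕄) (i j k : ℕ) : Definable 𝕄 fun v => CodedRel f (v i) (v j) (v k) :=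
  (mem_omega j).and ((mem_omega k).and
    (ex ((mem 0 _).and (pair_pair_mem f (j + 1) (k + 1) 0))))

theorem isCodeBisim (f : Elem 𝕄) (i j : ℕ) : Definable 𝕄 fun v => IsCodeBisim f (v i) (v j) :=
  all (all ((pair_mem 1 0 _).imp
    ((all ((codedRel f _ 0 1).imp (ex ((mem 0 _).and (pair_mem 0 1 _))))).and
      (all ((mem 0 _).imp (ex ((codedRel f _ 0 2).and (pair_mem 1 0 _))))))))

theorem decodes (f : Elem 𝕄) (i j k : ℕ) : Definable 𝕄 fun v => Decodes f (v i) (v j) (v k) :=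
  ex ((isCodeBisim f _ 0).and (pair_mem _ _ 0))

theorem codesWellFounded (f : Elem 𝕄) (i : ℕ) : Definable 𝕄 fun v => CodesWellFounded f (v i) :=
  all ((ex ((mem_omega 0).and (mem 0 1))).imp
    (ex ((mem_omega 0).and ((mem 0 1).and (all ((mem 0 2).imp (codedRel f _ 0 1).not))))))

end Definable

/-- `Z` is a bisimulation between the relations `E` and `E'`. -/
def IsBisim (E E' Z : ℕ → ℕ → Prop) : Prop := ∀ a b, Z a b →
  (∀ c, E c a → ∃ d, E' d b ∧ Z c d) ∧ ∀ d, E' d b → ∃ c, E c a ∧ Z c d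

namespace IsPairing

variable {f k l r x y c : Elem 𝕄} {j : ℕ → ℕ → ℕ} {a b : ℕ}

theorem codedRel_numeral_iff (hf : IsPairing f j) :
    CodedRel f r (numeral a) (numeral b) ↔ numeral (j a b) ∈ r := by
  simp [CodedRel, numeral_mem_omega, hf.pair_mem_iff]

theorem codedRel_iff (hf : IsPairing f j) :
    CodedRel f r c (numeral b) ↔ ∃ a, c = numeral a ∧ numeral (j a b) ∈ r := by
  constructor
  · intro h
    obtain ⟨a, rfl⟩ := mem_omega.1 h.1
    exact ⟨a, rfl, hf.codedRel_numeral_iff.1 h⟩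
  · rintro ⟨a, rfl, h⟩
    exact hf.codedRel_numeral_iff.2 h

theorem exists_mem_decodes (hf : IsPairing f j) (hx : Decodes f r (numeral b) x)
    (h : numeral (j a b) ∈ r) : ∃ y ∈ x, Decodes f r (numeral a) y := by
  obtain ⟨z, hz, hxz⟩ := hx
  obtain ⟨y, hy, hyz⟩ := (hz _ _ hxz).1 _ (hf.codedRel_numeral_iff.2 h)
  exact ⟨y, hy, z, hz, hyz⟩

theorem exists_decodes_of_mem (hf : IsPairing f j) (hx : Decodes f r (numeral b) x) (hy : y ∈ x) :
    ∃ a, numeral (j a b) ∈ r ∧ Decodes f r (numeral a) y := by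
  obtain ⟨z, hz, hxz⟩ := hx
  obtain ⟨c, hc, hyz⟩ := (hz _ _ hxz).2 y hy
  obtain ⟨a, rfl, h⟩ := hf.codedRel_iff.1 hc
  exact ⟨a, h, z, hz, hyz⟩

theorem eq_of_isBisim (hf : IsPairing f j) {Z : ℕ → ℕ → Prop}
    (hZ : IsBisim (fun a b => numeral (j a b) ∈ k) (fun a b => numeral (j a b) ∈ l) Z)
    (hab : Z a b) (hx : Decodes f k (numeral a) x) (hy : Decodes f l (numeral b) y) : x = y := by
  induction x using Elem.induction generalizing y a b with
  | h x ih =>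
    obtain ⟨forth, back⟩ := hZ a b hab
    ext z
    constructor
    · intro hz
      obtain ⟨c, hc, hcz⟩ := hf.exists_decodes_of_mem hx hz
      obtain ⟨d, hd, hcd⟩ := forth c hc
      obtain ⟨y', hy', hdy'⟩ := hf.exists_mem_decodes hy hd
      rwa [ih z hz hcd hcz hdy']
    · intro hz
      obtain ⟨d, hd, hdz⟩ := hf.exists_decodes_of_mem hy hz
      obtain ⟨c, hc, hcd⟩ := back d hd
      obtain ⟨x', hx', hcx'⟩ := hf.exists_mem_decodes hx hc
      rwa [← ih x' hx' hcd hcx' hdz]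

theorem isBisim_decodes_eq (hf : IsPairing f j) :
    IsBisim (fun a b => numeral (j a b) ∈ k) (fun a b => numeral (j a b) ∈ l)
      fun a b => ∃ x, Decodes f k (numeral a) x ∧ Decodes f l (numeral b) x := by
  rintro a b ⟨x, hkx, hlx⟩
  constructor
  · intro c hc
    obtain ⟨y, hy, hky⟩ := hf.exists_mem_decodes hkx hc
    obtain ⟨d, hd, hly⟩ := hf.exists_decodes_of_mem hlx hy
    exact ⟨d, hd, y, hky, hly⟩
  · intro d hd
    obtain ⟨y, hy, hly⟩ := hf.exists_mem_decodes hlx hd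
    obtain ⟨c, hc, hky⟩ := hf.exists_decodes_of_mem hkx hy
    exact ⟨c, hc, y, hky, hly⟩

theorem exists_forall_numeral_mem_iff (hf : IsPairing f j) {P : Env 𝕄 → Elem 𝕄 → Elem 𝕄 → Prop}
    (hP : Definable 𝕄 fun v => P (fun n => v (n + 2)) (v 0) (v 1)) (v : Env 𝕄) :
    ∃ r : Elem 𝕄, ∀ a b, numeral (j a b) ∈ r ↔ P v (numeral a) (numeral b) := by
  have hdef : Definable 𝕄 fun v => ∃ a ∈ Elem.omega, ∃ b ∈ Elem.omega,
      Elem.pair (Elem.pair a b) (v 0) ∈ f ∧ P (fun n => v (n + 1)) a b :=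
    .ex ((Definable.mem_omega 0).and (.ex ((Definable.mem_omega 0).and
      ((Definable.pair_pair_mem f 1 0 2).and (hP.rename (scons 1 (scons 0 (· + 3))))))))
  obtain ⟨r, hr⟩ := hdef.exists_sep v Elem.omega
  refine ⟨r, fun a b => (hr _).trans ⟨?_, fun h => ?_⟩⟩
  · rintro ⟨-, _, hc, _, hd, hmem, h⟩
    obtain ⟨c, rfl⟩ := mem_omega.1 hc
    obtain ⟨d, rfl⟩ := mem_omega.1 hd
    obtain ⟨rfl, rfl⟩ := hf.injective (numeral_injective (hf.pair_mem_iff.1 hmem))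
    exact h
  · exact ⟨numeral_mem_omega _, _, numeral_mem_omega a, _, numeral_mem_omega b,
      hf.pair_mem_iff.2 rfl, h⟩

theorem eq_iff_exists_isBisim (hf : IsPairing f j) (hx : Decodes f k (numeral a) x)
    (hy : Decodes f l (numeral b) y) :
    x = y ↔ ∃ z : Elem 𝕄, numeral (j a b) ∈ z ∧
      IsBisim (fun a b => numeral (j a b) ∈ k) (fun a b => numeral (j a b) ∈ l)
        fun a b => numeral (j a b) ∈ z := by
  refine ⟨?_, fun ⟨z, hab, hz⟩ => hf.eq_of_isBisim hz hab hx hy⟩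
  rintro rfl
  obtain ⟨z, hz⟩ := hf.exists_forall_numeral_mem_iff
    (P := fun v a b => ∃ x, Decodes f (v 0) a x ∧ Decodes f (v 1) b x)
    (.ex ((Definable.decodes f 3 1 0).and (.decodes f 4 2 0))) (scons k fun _ => l)
  refine ⟨z, (hz a b).2 ⟨x, hx, hy⟩, ?_⟩
  simp only [hz]
  exact hf.isBisim_decodes_eq

end IsPairing

section Collapse

variable {f r a x b : Elem 𝕄}

theorem IsCodeBisim.sUnion {B : Elem 𝕄} (hB : ∀ b ∈ B, IsCodeBisim f r b) :
    IsCodeBisim f r (Elem.sUnion B) := by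
  intro x a hxa
  obtain ⟨b, hb, hxb⟩ := Elem.mem_sUnion.1 hxa
  obtain ⟨forth, back⟩ := hB b hb x a hxb
  refine ⟨fun c hc => ?_, fun y hy => ?_⟩
  · obtain ⟨y, hy, hyc⟩ := forth c hc
    exact ⟨y, hy, Elem.mem_sUnion.2 ⟨b, hb, hyc⟩⟩
  · obtain ⟨c, hc, hyc⟩ := back y hy
    exact ⟨c, hc, Elem.mem_sUnion.2 ⟨b, hb, hyc⟩⟩

theorem IsCodeBisim.decodes_of_forall_mem_iff (hb : IsCodeBisim f r b)
    (hpred : ∀ c, CodedRel f r c a → ∃ y, Elem.pair y c ∈ b)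
    (hx : ∀ y, y ∈ x ↔ ∃ c, CodedRel f r c a ∧ Elem.pair y c ∈ b) : Decodes f r a x := by
  refine ⟨b ∪ {Elem.pair x a}, fun z d hzd => ?_,
    Elem.mem_union.2 (.inr (Elem.mem_singleton.2 rfl))⟩
  suffices h : (∀ c, CodedRel f r c d → ∃ y ∈ z, Elem.pair y c ∈ b) ∧
      ∀ y ∈ z, ∃ c, CodedRel f r c d ∧ Elem.pair y c ∈ b by
    simp only [Elem.mem_union]
    exact ⟨fun c hc => (h.1 c hc).imp fun _ => And.imp_right .inl,
      fun y hy => (h.2 y hy).imp fun _ => And.imp_right .inl⟩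
  obtain hzd | hzd := Elem.mem_union.1 hzd
  · exact hb z d hzd
  obtain ⟨rfl, rfl⟩ := Elem.pair_inj.1 (Elem.mem_singleton.1 hzd)
  refine ⟨fun c hc => ?_, fun y => (hx y).1⟩
  obtain ⟨y, hy⟩ := hpred c hc
  exact ⟨y, (hx y).2 ⟨c, hc, hy⟩, hy⟩

theorem exists_isCodeBisim_of_predecessors (hpred : ∀ c, CodedRel f r c a → ∃ y, Decodes f r c y) :
    ∃ b, IsCodeBisim f r b ∧ ∀ c, CodedRel f r c a → ∃ y, Elem.pair y c ∈ b := by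
  obtain ⟨p, hp⟩ := (Definable.codedRel f 1 0 2).exists_sep (scons r fun _ => a) Elem.omega
  obtain ⟨B, hB⟩ := Definable.exists_collection
    (P := fun v c b => IsCodeBisim f (v 0) b ∧ ∃ y, Elem.pair y c ∈ b)
    ((Definable.isCodeBisim f 2 1).and (.ex (.pair_mem 0 1 2))) (fun _ => r) p fun c hc => by
      obtain ⟨y, b, hb, hyc⟩ := hpred c ((hp c).1 hc).2
      exact ⟨b, hb, y, hyc⟩
  obtain ⟨B', hB'⟩ := (Definable.isCodeBisim f 1 0).exists_sep (fun _ => r) B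
  refine ⟨Elem.sUnion B', .sUnion fun b hb => ((hB' b).1 hb).2, fun c hc => ?_⟩
  obtain ⟨b, hbB, hb, y, hyc⟩ := hB c ((hp c).2 ⟨hc.1, hc⟩)
  exact ⟨y, Elem.mem_sUnion.2 ⟨b, (hB' b).2 ⟨hbB, hb⟩, hyc⟩⟩

theorem exists_decodes_of_predecessors (hpred : ∀ c, CodedRel f r c a → ∃ y, Decodes f r c y) :
    ∃ x, Decodes f r a x := by
  obtain ⟨b, hb, hpred⟩ := exists_isCodeBisim_of_predecessors hpred
  have hdef : Definable 𝕄 fun v => ∃ c, CodedRel f (v 1) c (v 2) ∧ Elem.pair (v 0) c ∈ v 3 :=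
    .ex ((Definable.codedRel f 2 0 3).and (.pair_mem 1 0 4))
  obtain ⟨x, hx⟩ := hdef.exists_sep (scons r (scons a fun _ => b)) (Elem.sUnion (Elem.sUnion b))
  refine ⟨x, hb.decodes_of_forall_mem_iff hpred fun y => (hx y).trans (and_iff_right_of_imp ?_)⟩
  rintro ⟨c, -, hyc⟩
  exact Elem.mem_sUnion.2 ⟨{y}, Elem.mem_sUnion.2 ⟨_, hyc, Elem.mem_upair.2 (.inl rfl)⟩,
    Elem.mem_singleton.2 rfl⟩

theorem CodesWellFounded.exists_decodes (hr : CodesWellFounded f r) (ha : a ∈ Elem.omega) :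
    ∃ x, Decodes f r a x := by
  by_contra hcon
  have hdef : Definable 𝕄 fun v => ¬ ∃ x, Decodes f (v 1) (v 0) x :=
    (Definable.ex (.decodes f 2 1 0)).not
  obtain ⟨s, hs⟩ := hdef.exists_sep (fun _ => r) Elem.omega
  obtain ⟨m, -, hms, hmin⟩ := hr s ⟨a, ha, (hs a).2 ⟨ha, hcon⟩⟩
  refine ((hs m).1 hms).2 (exists_decodes_of_predecessors fun c hc => ?_)
  by_contra hcon
  exact hmin c ((hs c).2 ⟨hc.1, hcon⟩) hc

end Collapse

section ExistsCode

variable {f g t x r : Elem 𝕄} {j : ℕ → ℕ → ℕ}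

theorem exists_transitive_superset (x : Elem 𝕄) :
    ∃ t : Elem 𝕄, x ∈ t ∧ ∀ y ∈ t, ∀ z ∈ y, z ∈ t := by
  induction x using Elem.induction with
  | h x ih =>
    have hdef : Definable 𝕄 fun v => ∀ y ∈ v 0, ∀ z ∈ y, z ∈ v 0 :=
      .all ((Definable.mem 0 1).imp (.all ((Definable.mem 0 1).imp (.mem 0 2))))
    obtain ⟨B, hB⟩ := Definable.exists_collection
      (P := fun _ x t => x ∈ t ∧ ∀ y ∈ t, ∀ z ∈ y, z ∈ t)
      ((Definable.mem 0 1).and (hdef.rename (· + 1))) (fun _ => x) x ih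
    obtain ⟨B', hB'⟩ := hdef.exists_sep (fun _ => x) B
    refine ⟨Elem.sUnion B' ∪ {x}, Elem.mem_union.2 (.inr (Elem.mem_singleton.2 rfl)),
      fun y hy z hz => Elem.mem_union.2 (.inl (Elem.mem_sUnion.2 ?_))⟩
    obtain hy | hy := Elem.mem_union.1 hy
    · obtain ⟨b, hb, hyb⟩ := Elem.mem_sUnion.1 hy
      exact ⟨b, hb, ((hB' b).1 hb).2 y hyb z hz⟩
    · obtain rfl := Elem.mem_singleton.1 hy
      obtain ⟨t, ht, hzt, htrans⟩ := hB z hz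
      exact ⟨t, (hB' t).2 ⟨ht, htrans⟩, hzt⟩

/-- `r` codes the relation on `ω` that the injection `g` carries over from `∈`. -/
def CodesMem (f g r : Elem 𝕄) : Prop :=
  ∀ a b, CodedRel f r a b ↔ ∃ x y, x ∈ y ∧ Elem.pair x a ∈ g ∧ Elem.pair y b ∈ g

theorem IsInjectionToOmega.exists_codesMem (hg : IsInjectionToOmega g t) (hf : IsPairing f j) :
    ∃ r, CodesMem f g r := by
  obtain ⟨r, hr⟩ := hf.exists_forall_numeral_mem_iff
    (P := fun v a b => ∃ x y, x ∈ y ∧ Elem.pair x a ∈ v 0 ∧ Elem.pair y b ∈ v 0)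
    (.ex (.ex ((Definable.mem 1 0).and ((Definable.pair_mem 1 2 4).and (.pair_mem 0 3 4)))))
    fun _ => g
  refine ⟨r, fun a b => ⟨fun h => ?_, ?_⟩⟩
  · obtain ⟨n, rfl⟩ := mem_omega.1 h.2.1
    obtain ⟨m, rfl, hmn⟩ := hf.codedRel_iff.1 h
    exact (hr m n).1 hmn
  · rintro ⟨x, y, hxy, hxa, hyb⟩
    obtain ⟨m, rfl⟩ := (hg.mem_and_eq_numeral hxa).2
    obtain ⟨n, rfl⟩ := (hg.mem_and_eq_numeral hyb).2
    exact hf.codedRel_numeral_iff.2 ((hr m n).2 ⟨x, y, hxy, hxa, hyb⟩)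

theorem CodesMem.isCodeBisim (hr : CodesMem f g r) (hg : IsInjectionToOmega g t)
    (ht : ∀ y ∈ t, ∀ z ∈ y, z ∈ t) : IsCodeBisim f r g := by
  intro x a hxa
  refine ⟨fun c hc => ?_, fun y hy => ?_⟩
  · obtain ⟨y, x', hyx, hyc, hxa'⟩ := (hr c a).1 hc
    obtain rfl := hg.injective hxa hxa'
    exact ⟨y, hyx, hyc⟩
  · obtain ⟨n, hn⟩ := hg.total y (ht x (hg.mem_and_eq_numeral hxa).1 y hy)
    exact ⟨_, (hr _ _).2 ⟨y, x, hy, hn, hxa⟩, hn⟩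

theorem CodesMem.codesWellFounded (hr : CodesMem f g r) (hg : IsInjectionToOmega g t) :
    CodesWellFounded f r := by
  rintro s ⟨a, ha, has⟩
  by_contra! hmin
  have notMem (x : Elem 𝕄) : ∀ a ∈ s, a ∈ Elem.omega → Elem.pair x a ∉ g := by
    induction x using Elem.induction with
    | h x ih =>
      intro a has ha hxa
      obtain ⟨c, hcs, hca⟩ := hmin a ha has
      obtain ⟨y, x', hyx, hyc, hxa'⟩ := (hr c a).1 hca
      obtain rfl := hg.injective hxa hxa'
      exact ih y hyx c hcs hca.1 hyc
  obtain ⟨c, hcs, hca⟩ := hmin a ha has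
  obtain ⟨y, x, -, hyc, -⟩ := (hr c a).1 hca
  exact notMem y c hcs hca.1 hyc

theorem IsPairing.exists_code (hf : IsPairing f j) (hctbl : AllSetsCountable 𝕄) (x : Elem 𝕄) :
    ∃ (r : Elem 𝕄) (n : ℕ), CodesWellFounded f r ∧ Decodes f r (numeral n) x := by
  obtain ⟨t, hxt, ht⟩ := exists_transitive_superset x
  obtain ⟨g, hg⟩ := hctbl.exists_isInjectionToOmega t
  obtain ⟨r, hr⟩ := hg.exists_codesMem hf
  obtain ⟨n, hn⟩ := hg.total x hxt
  exact ⟨r, n, hr.codesWellFounded hg, g, hr.isCodeBisim hg ht, hn⟩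

end ExistsCode

end Coding

/-! ### Translating truth in the model into statements about the generic reals -/

section Translation

variable {𝕄 : GBModel.{u}} {F : ClassForcing 𝕄} {f : Elem 𝕄} {j : ℕ → ℕ → ℕ}

/-- The relation coded by the `k`-th generic real is well-founded, as far as the generic reals
can tell. -/
def GenericWellFounded (𝕄 : GBModel.{u}) (j : ℕ → ℕ → ℕ) (G : Set ZFSet.{u}) (k : ℕ) : Prop :=
  ∀ l, (∃ a, GenericBit 𝕄 G l a) →
    ∃ a, GenericBit 𝕄 G l a ∧ ∀ c, GenericBit 𝕄 G l c → ¬ GenericBit 𝕄 G k (j c a)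

/-- Some generic real codes a bisimulation relating `a` and `b`, as points of the relations coded
by the `k`-th and the `l`-th generic real. -/
def GenericBisimilar (𝕄 : GBModel.{u}) (j : ℕ → ℕ → ℕ) (G : Set ZFSet.{u}) (k a l b : ℕ) : Prop :=
  ∃ m, GenericBit 𝕄 G m (j a b) ∧ IsBisim (fun a b => GenericBit 𝕄 G k (j a b))
    (fun a b => GenericBit 𝕄 G l (j a b)) fun a b => GenericBit 𝕄 G m (j a b)

/-- The membership relation between coded sets that goes with `GenericBisimilar`. -/
def GenericMem (𝕄 : GBModel.{u}) (j : ℕ → ℕ → ℕ) (G : Set ZFSet.{u}) (k a l b : ℕ) : Prop :=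
  ∃ c, GenericBit 𝕄 G l (j c b) ∧ GenericBisimilar 𝕄 j G k a l c

namespace Expressible

theorem genericBit_pairing (hF : IsProductForcing F) (hf : IsPairing f j) (k a b : ℕ) :
    Expressible F fun G v => GenericBit 𝕄 G (v k) (j (v a) (v b)) := by
  have hpairing : DefinableOnNumerals 𝕄 fun v => v 0 = j (v (a + 1)) (v (b + 1)) :=
    ⟨_, .pair_pair_mem f (a + 1) (b + 1) 0, fun v =>
      (hf.pair_mem_iff.trans numeral_injective.eq_iff).symm⟩
  refine (ex (A := fun G v c => c = j (v a) (v b) ∧ GenericBit 𝕄 G (v k) c)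
    ((of_definable hpairing).and (genericBit hF (k + 1) 0))).congr fun G _ v => ?_
  exact exists_eq_left

theorem genericWellFounded (hF : IsProductForcing F) (hf : IsPairing f j) (k : ℕ) :
    Expressible F fun G v => GenericWellFounded 𝕄 j G (v k) :=
  all ((ex (genericBit hF 1 0)).imp (ex ((genericBit hF 1 0).and
    (all ((genericBit hF 2 0).imp (genericBit_pairing hF hf (k + 3) 0 1).not)))))

theorem genericBisimilar (hF : IsProductForcing F) (hf : IsPairing f j) (k a l b : ℕ) :
    Expressible F fun G v => GenericBisimilar 𝕄 j G (v k) (v a) (v l) (v b) := by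
  have hbit := genericBit_pairing hF hf
  exact ex ((hbit 0 (a + 1) (b + 1)).and (all (all ((hbit 2 1 0).imp
    ((all ((hbit (k + 4) 0 2).imp (ex ((hbit (l + 5) 0 2).and (hbit 4 1 0))))).and
      (all ((hbit (l + 4) 0 1).imp (ex ((hbit (k + 5) 0 3).and (hbit 4 0 1))))))))))

theorem genericMem (hF : IsProductForcing F) (hf : IsPairing f j) (k a l b : ℕ) :
    Expressible F fun G v => GenericMem 𝕄 j G (v k) (v a) (v l) (v b) :=
  ex ((genericBit_pairing hF hf (l + 1) 0 (b + 1)).and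
    (genericBisimilar hF hf (k + 1) (a + 1) (l + 1) 0))

theorem isGenericReal (hF : IsProductForcing F) (k : ℕ) (r : Elem 𝕄) :
    Expressible F fun G v => IsGenericReal G (v k) r :=
  all ((genericBit hF (k + 1) 0).iff (numeral_mem 0 r))

end Expressible

/-- `x` is coded by the point `a` of the relation coded by the `k`-th generic real. -/
def GenericCodes (f : Elem 𝕄) (G : Set ZFSet.{u}) (k a : ℕ) (x : Elem 𝕄) : Prop :=
  ∃ r : Elem 𝕄, IsGenericReal G k r ∧ CodesWellFounded f r ∧ Decodes f r (numeral a) x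

section Correctness

variable {G : Set ZFSet.{u}} {k a l b : ℕ} {r x y : Elem 𝕄}

theorem IsGenericReal.genericWellFounded_iff (hr : IsGenericReal G k r) (hF : IsProductForcing F)
    (hG : F.Generic G) (hf : IsPairing f j) :
    GenericWellFounded 𝕄 j G k ↔ CodesWellFounded f r := by
  constructor
  · rintro h s ⟨_, ha, has⟩
    obtain ⟨l, hl⟩ := hF.exists_index_isGenericReal hG s
    obtain ⟨a, rfl⟩ := mem_omega.1 ha
    obtain ⟨m, hm, hmin⟩ := h l ⟨a, (hl a).2 has⟩
    refine ⟨numeral m, numeral_mem_omega m, (hl m).1 hm, fun c hcs hc => ?_⟩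
    obtain ⟨c, rfl, hcm⟩ := hf.codedRel_iff.1 hc
    exact hmin c ((hl c).2 hcs) ((hr _).2 hcm)
  · rintro h l ⟨a, ha⟩
    obtain ⟨s, hs⟩ := hF.exists_isGenericReal hG l
    obtain ⟨_, hm, hms, hmin⟩ := h s ⟨numeral a, numeral_mem_omega a, (hs a).1 ha⟩
    obtain ⟨m, rfl⟩ := mem_omega.1 hm
    exact ⟨m, (hs m).2 hms, fun c hc hcm =>
      hmin _ ((hs c).1 hc) (hf.codedRel_numeral_iff.2 ((hr _).1 hcm))⟩

namespace GenericCodes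

theorem genericBisimilar_iff (hx : GenericCodes f G k a x) (hy : GenericCodes f G l b y)
    (hF : IsProductForcing F) (hG : F.Generic G) (hf : IsPairing f j) :
    GenericBisimilar 𝕄 j G k a l b ↔ x = y := by
  obtain ⟨r, hr, -, hx⟩ := hx
  obtain ⟨s, hs, -, hy⟩ := hy
  rw [hf.eq_iff_exists_isBisim hx hy, GenericBisimilar]
  simp only [IsGenericReal] at hr hs
  simp only [hr, hs]
  constructor
  · rintro ⟨m, h⟩
    obtain ⟨z, hz⟩ := hF.exists_isGenericReal hG m
    simp only [hz _] at h
    exact ⟨z, h⟩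
  · rintro ⟨z, h⟩
    obtain ⟨m, hz⟩ := hF.exists_index_isGenericReal hG z
    simp only [← hz _] at h
    exact ⟨m, h⟩

theorem genericMem_iff (hx : GenericCodes f G k a x) (hy : GenericCodes f G l b y)
    (hF : IsProductForcing F) (hG : F.Generic G) (hf : IsPairing f j) :
    GenericMem 𝕄 j G k a l b ↔ x ∈ y := by
  obtain ⟨s, hs, hwf, hy⟩ := hy
  constructor
  · rintro ⟨c, hc, hac⟩
    obtain ⟨y', hy', hcy'⟩ := hf.exists_mem_decodes hy ((hs _).1 hc)
    rwa [(hx.genericBisimilar_iff ⟨s, hs, hwf, hcy'⟩ hF hG hf).1 hac]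
  · intro hxy
    obtain ⟨c, hc, hcx⟩ := hf.exists_decodes_of_mem hy hxy
    exact ⟨c, (hs _).2 hc, (hx.genericBisimilar_iff ⟨s, hs, hwf, hcx⟩ hF hG hf).2 rfl⟩

end GenericCodes

theorem IsProductForcing.exists_genericCodes_of_genericWellFounded (hF : IsProductForcing F)
    (hG : F.Generic G) (hf : IsPairing f j) (hk : GenericWellFounded 𝕄 j G k) (a : ℕ) :
    ∃ x, GenericCodes f G k a x := by
  obtain ⟨r, hr⟩ := hF.exists_isGenericReal hG k
  have hwf := (hr.genericWellFounded_iff hF hG hf).1 hk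
  obtain ⟨x, hx⟩ := hwf.exists_decodes (numeral_mem_omega a)
  exact ⟨x, r, hr, hwf, hx⟩

theorem IsProductForcing.exists_genericCodes (hF : IsProductForcing F) (hG : F.Generic G)
    (hf : IsPairing f j) (hctbl : AllSetsCountable 𝕄) (x : Elem 𝕄) :
    ∃ k a, GenericWellFounded 𝕄 j G k ∧ GenericCodes f G k a x := by
  obtain ⟨r, a, hwf, hx⟩ := hf.exists_code hctbl x
  obtain ⟨k, hk⟩ := hF.exists_index_isGenericReal hG r
  exact ⟨k, a, (hk.genericWellFounded_iff hF hG hf).2 hwf, r, hk, hwf, hx⟩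

end Correctness

variable {p : Env 𝕄} {L : Set ℕ}

/-- In the assignment `w`, the variables in `L` have the values coded by `v`, where `v (2 * i)` and
`v (2 * i + 1)` are the code of variable `i`; the other variables have the fixed values `p`. -/
structure CodedAssignment (f : Elem 𝕄) (p : Env 𝕄) (L : Set ℕ) (G : Set ZFSet.{u}) (v : ℕ → ℕ)
    (w : Env 𝕄) : Prop where
  codes : ∀ i ∈ L, GenericCodes f G (v (2 * i)) (v (2 * i + 1)) (w i)
  eq_param : ∀ i ∉ L, w i = p i

theorem CodedAssignment.update {G : Set ZFSet.{u}} {v : ℕ → ℕ} {w : Env 𝕄} {k a : ℕ} {x : Elem 𝕄}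
    (hw : CodedAssignment f p L G v w) (i : ℕ) (hx : GenericCodes f G k a x) :
    CodedAssignment f p (insert i L) G
      (Function.update (Function.update v (2 * i) k) (2 * i + 1) a) (Function.update w i x) := by
  refine ⟨fun l hl => ?_, fun l hl => ?_⟩
  · obtain rfl | hne := eq_or_ne l i
    · simpa using hx
    · rw [Function.update_of_ne (by omega), Function.update_of_ne (by omega),
        Function.update_of_ne (by omega), Function.update_of_ne (by omega),
        Function.update_of_ne hne]
      exact hw.codes l (hl.resolve_left hne)
  · rw [Set.mem_insert_iff, not_or] at hl
    rw [Function.update_of_ne hl.1]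
    exact hw.eq_param l hl.2

/-- `T G v` is an expressible nonempty relation that holds only of codes of variable `i` of the
assignment coded by `v`. -/
structure LocatesCode (F : ClassForcing 𝕄) (f : Elem 𝕄) (p : Env 𝕄) (L : Set ℕ) (i : ℕ)
    (T : Set ZFSet.{u} → (ℕ → ℕ) → ℕ → ℕ → Prop) : Prop where
  expressible : Expressible F fun G v => T G (fun n => v (n + 2)) (v 0) (v 1)
  exists_code : ∀ {G}, F.Generic G → ∀ v, ∃ k a, T G v k a
  codes : ∀ {G v w k a}, F.Generic G → CodedAssignment f p L G v w → T G v k a →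
    GenericCodes f G k a (w i)

theorem IsProductForcing.exists_locatesCode (hF : IsProductForcing F) (hf : IsPairing f j)
    (hctbl : AllSetsCountable 𝕄) (p : Env 𝕄) (L : Set ℕ) (i : ℕ) :
    ∃ T, LocatesCode F f p L i T := by
  by_cases hi : i ∈ L
  · refine ⟨fun _ v k a => k = v (2 * i) ∧ a = v (2 * i + 1),
      (Expressible.eq 0 (2 * i + 2)).and (.eq 1 (2 * i + 1 + 2)),
      fun _ _ => ⟨_, _, rfl, rfl⟩, fun _ hw hT => ?_⟩
    rw [hT.1, hT.2]
    exact hw.codes i hi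
  · obtain ⟨r, n, hwf, hn⟩ := hf.exists_code hctbl (p i)
    refine ⟨fun G _ k a => IsGenericReal G k r ∧ a = n,
      (Expressible.isGenericReal hF 0 r).and (.eq_const 1 n), fun hG _ => ?_, fun _ hw hT => ?_⟩
    · obtain ⟨k, hk⟩ := hF.exists_index_isGenericReal hG r
      exact ⟨k, n, hk, rfl⟩
    · rw [hw.eq_param i hi, hT.2]
      exact ⟨r, hT.1, hwf, hn⟩

/-- The property `S` of assignments can be expressed in terms of the generic reals that code the
variables in `L`. -/
def Translatable (F : ClassForcing 𝕄) (f : Elem 𝕄) (p : Env 𝕄) (L : Set ℕ)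
    (S : Env 𝕄 → Prop) : Prop :=
  ∃ A, Expressible F A ∧ ∀ G, F.Generic G → ∀ v w, CodedAssignment f p L G v w → (A G v ↔ S w)

namespace Translatable

variable {S S' : Env 𝕄 → Prop}

theorem of_codes {R : Set ZFSet.{u} → ℕ → ℕ → ℕ → ℕ → Prop} {Q : Elem 𝕄 → Elem 𝕄 → Prop}
    (hF : IsProductForcing F) (hf : IsPairing f j) (hctbl : AllSetsCountable 𝕄)
    (hR : Expressible F fun G v => R G (v 3) (v 2) (v 1) (v 0))
    (hRQ : ∀ G, F.Generic G → ∀ k a l b x y, GenericCodes f G k a x → GenericCodes f G l b y →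
      (R G k a l b ↔ Q x y)) (i i' : ℕ) :
    Translatable F f p L fun w => Q (w i) (w i') := by
  obtain ⟨T, hT⟩ := hF.exists_locatesCode hf hctbl p L i
  obtain ⟨T', hT'⟩ := hF.exists_locatesCode hf hctbl p L i'
  refine ⟨fun G v => ∃ k a l b, T G v k a ∧ T' G v l b ∧ R G k a l b,
    .ex (.ex (.ex (.ex ((hT.expressible.rename (scons 3 (scons 2 (· + 4)))).and
      ((hT'.expressible.rename (scons 1 (scons 0 (· + 4)))).and hR))))), fun G hG v w hw => ?_⟩
  constructor
  · rintro ⟨k, a, l, b, hka, hlb, h⟩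
    exact (hRQ G hG _ _ _ _ _ _ (hT.codes hG hw hka) (hT'.codes hG hw hlb)).1 h
  · intro h
    obtain ⟨k, a, hka⟩ := hT.exists_code hG v
    obtain ⟨l, b, hlb⟩ := hT'.exists_code hG v
    exact ⟨k, a, l, b, hka, hlb,
      (hRQ G hG _ _ _ _ _ _ (hT.codes hG hw hka) (hT'.codes hG hw hlb)).2 h⟩

theorem not (hS : Translatable F f p L S) : Translatable F f p L fun w => ¬ S w := by
  obtain ⟨A, hA, hAS⟩ := hS
  exact ⟨_, hA.not, fun G hG v w hw => not_congr (hAS G hG v w hw)⟩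

theorem or (hS : Translatable F f p L S) (hS' : Translatable F f p L S') :
    Translatable F f p L fun w => S w ∨ S' w := by
  obtain ⟨A, hA, hAS⟩ := hS
  obtain ⟨B, hB, hBS⟩ := hS'
  exact ⟨_, hA.or hB, fun G hG v w hw => or_congr (hAS G hG v w hw) (hBS G hG v w hw)⟩

theorem ex {i : ℕ} (hF : IsProductForcing F) (hf : IsPairing f j) (hctbl : AllSetsCountable 𝕄)
    (hS : Translatable F f p (insert i L) S) :
    Translatable F f p L fun w => ∃ x, S (Function.update w i x) := by
  obtain ⟨A, hA, hAS⟩ := hS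
  refine ⟨fun G v => ∃ k a, GenericWellFounded 𝕄 j G k ∧
    A G (Function.update (Function.update v (2 * i) k) (2 * i + 1) a),
    .ex (.ex ((Expressible.genericWellFounded hF hf 1).and ?_)), fun G hG v w hw => ?_⟩
  · refine (hA.rename (Function.update (Function.update (· + 2) (2 * i) 1) (2 * i + 1) 0)).congr
      fun G _ v => iff_of_eq (congrArg (A G) ?_)
    exact (Function.comp_update v _ _ _).trans
      (congrArg (Function.update · _ _) (Function.comp_update v _ _ _))
  · constructor
    · rintro ⟨k, a, hk, h⟩
      obtain ⟨x, hx⟩ := hF.exists_genericCodes_of_genericWellFounded hG hf hk a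
      exact ⟨x, (hAS G hG _ _ (hw.update i hx)).1 h⟩
    · rintro ⟨x, h⟩
      obtain ⟨k, a, hk, hx⟩ := hF.exists_genericCodes hG hf hctbl x
      exact ⟨k, a, hk, (hAS G hG _ _ (hw.update i hx)).2 h⟩

theorem congr (h : ∀ w, S w ↔ S' w) (hS : Translatable F f p L S) : Translatable F f p L S' :=
  (funext fun w => propext (h w) : S = S') ▸ hS

theorem sat (hF : IsProductForcing F) (hf : IsPairing f j) (hctbl : AllSetsCountable 𝕄)
    (φ : EFormula) (p : Env 𝕄) (L : Set ℕ) :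
    Translatable F f p L fun w => φ.Sat 𝕄.M fun n => (w n).val := by
  induction φ generalizing L with
  | mem i i' =>
    exact of_codes (Q := (· ∈ ·)) hF hf hctbl (.genericMem hF hf 3 2 1 0)
      (fun G hG _ _ _ _ _ _ hx hy => hx.genericMem_iff hy hF hG hf) i i'
  | eq i i' =>
    exact (of_codes (Q := (· = ·)) hF hf hctbl (.genericBisimilar hF hf 3 2 1 0)
      (fun G hG _ _ _ _ _ _ hx hy => hx.genericBisimilar_iff hy hF hG hf) i i').congr
      fun _ => Elem.val_inj.symm
  | not φ ih => exact (ih L).not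
  | or φ ψ ihφ ihψ => exact (ihφ L).or (ihψ L)
  | ex i φ ih =>
    refine ((ih (insert i L)).ex hF hf hctbl).congr fun w => ?_
    have update_val (x : Elem 𝕄) : (fun n => (Function.update w i x n).val) =
        Function.update (fun n => (w n).val) i x.val := Function.comp_update Elem.val w i x
    simp only [update_val]
    exact ⟨fun ⟨x, h⟩ => ⟨x.val, x.property, h⟩, fun ⟨x, hx, h⟩ => ⟨⟨x, hx⟩, h⟩⟩

end Translatable

end Translation

/-! ### Diagonalization -/

section Diagonal

variable {𝕄 : GBModel.{u}} {F : ClassForcing 𝕄} {f : Elem 𝕄} {j : ℕ → ℕ → ℕ}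

/-- The first generic real codes `x` by its point `n`, where the second generic real is `{n}`. -/
def FirstRealsCode (f : Elem 𝕄) (G : Set ZFSet.{u}) (x : Elem 𝕄) : Prop :=
  ∃ n, GenericCodes f G 0 n x ∧ ∀ m, GenericBit 𝕄 G 1 m ↔ m = n

theorem exists_names_eval_eq_iff_mem (hF : IsProductForcing F) (hf : IsPairing f j)
    (hctbl : AllSetsCountable 𝕄) {X : Set ZFSet.{u}} (hX : DefinableOver 𝕄.M X) :
    ∃ ν μ : Elem 𝕄, F.Name ν ∧ F.Name μ ∧ ∀ G, F.Generic G → ∀ x, FirstRealsCode f G x →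
      (ν.eval G = μ.eval G ↔ x.val ∈ X) := by
  obtain ⟨φ, p, hp, rfl⟩ := hX
  obtain ⟨A, hA, hAφ⟩ := Translatable.sat hF hf hctbl φ (fun n => ⟨p n, hp n⟩) {0}
  have hB : Expressible F fun G v => ∃ n, GenericBit 𝕄 G (v 1) n ∧ A G (scons (v 0) fun _ => n) :=
    .ex ((Expressible.genericBit hF 2 0).and ((hA.rename (scons 1 fun _ => 0)).congr
      fun G _ v => iff_of_eq (congrArg (A G) (funext fun n => by cases n <;> rfl))))
  obtain ⟨⟨α, β, hα, hβ, hαβ⟩, -⟩ := hB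
  refine ⟨α (numeralEnv id), β (numeralEnv id), hα.name id, hβ.name id, ?_⟩
  rintro G hG x ⟨n, hx, hn⟩
  have hw : CodedAssignment f (fun n => ⟨p n, hp n⟩) {0} G (scons 0 fun _ => n)
      (Function.update (fun n => ⟨p n, hp n⟩) 0 x) := by
    refine ⟨?_, fun i hi => Function.update_of_ne hi _ _⟩
    rintro i rfl
    simpa using hx
  have update_val : (fun n => (Function.update (fun n => (⟨p n, hp n⟩ : Elem 𝕄)) 0 x n).val) =
      Function.update p 0 x.val := Function.comp_update Elem.val _ 0 x
  calc (α (numeralEnv id)).eval G = (β (numeralEnv id)).eval G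
      ↔ ∃ m, GenericBit 𝕄 G 1 m ∧ A G (scons 0 fun _ => m) := (hαβ G hG id).symm
    _ ↔ A G (scons 0 fun _ => n) := by simp only [hn, exists_eq_left]
    _ ↔ φ.Sat 𝕄.M (Function.update p 0 x.val) := update_val ▸ hAφ G hG _ _ hw
    _ ↔ x.val ∈ {x | x ∈ 𝕄.M ∧ φ.Sat 𝕄.M (Function.update p 0 x)} :=
      (and_iff_right x.property).symm

/-- `q` decides the first two generic reals in such a way that they code `x`. -/
def DeterminesCode (f q x : Elem 𝕄) : Prop :=
  ∃ r n, (n ∈ Elem.omega ∧ CodesWellFounded f r ∧ Decodes f r n x) ∧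
    Elem.pair (numeral 0) (charFun r) ∈ q ∧ Elem.pair (numeral 1) (charFun {n}) ∈ q

theorem Definable.determinesCode (f : Elem 𝕄) (i k : ℕ) :
    Definable 𝕄 fun v => DeterminesCode f (v i) (v k) :=
  .ex (.ex (((Definable.mem_omega 0).and
    ((codesWellFounded f 1).and (decodes f 1 0 (k + 2)))).and
    ((mem_terms ((DefinableTerm.const _).pair (DefinableTerm.var 1).charFun) (.var (i + 2))).and
      (mem_terms ((DefinableTerm.const _).pair
        ((DefinableTerm.var 0).upair (.var 0)).charFun) (.var (i + 2))))))

theorem IsProductForcing.exists_determinesCode (hF : IsProductForcing F) (hf : IsPairing f j)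
    (hctbl : AllSetsCountable 𝕄) (x : Elem 𝕄) :
    ∃ q : Elem 𝕄, q.val ∈ F.P ∧ DeterminesCode f q x := by
  obtain ⟨r, n, hr, hn⟩ := hf.exists_code hctbl x
  refine ⟨seq (fun i => charFun (if i = 0 then r else {numeral n})) 2,
    hF.seq_mem fun i _ => isPartialBits_charFun _, r, numeral n, ⟨numeral_mem_omega n, hr, hn⟩, ?_⟩
  simp [pair_numeral_mem_seq]

theorem DeterminesCode.firstRealsCode {q x : Elem 𝕄} {G : Set ZFSet.{u}}
    (h : DeterminesCode f q x) (hF : IsProductForcing F) (hG : F.Generic G) (hq : q.val ∈ G) :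
    FirstRealsCode f G x := by
  obtain ⟨r, _, ⟨hn, hwf, hx⟩, hr, hsing⟩ := h
  obtain ⟨n, rfl⟩ := mem_omega.1 hn
  refine ⟨n, ⟨r, hF.isGenericReal_of_pair_mem hG hq hr, hwf, hx⟩, fun m => ?_⟩
  rw [hF.isGenericReal_of_pair_mem hG hq hsing m, Elem.mem_singleton, numeral_injective.eq_iff]

/-- The class of codes of `⟨p, σ₀, …, σ_{m-1}⟩` with `p ⊩ φ(σ₀, …, σ_{m-1})`, which the definability
lemma asserts to belong to `𝒞`. -/
def ClassForcing.forcingRelation (F : ClassForcing 𝕄) (φ : EFormula) (m : ℕ) : Set ZFSet.{u} :=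
  {x | ∃ p ∈ F.P, ∃ σs : Fin m → ZFSet.{u}, (∀ i, σs i ∈ 𝕄.M ∧ IsName F.P (σs i)) ∧
    Forces 𝕄 F φ m p σs ∧ x = p.pair (listEncode (List.ofFn σs))}

theorem ClassForcing.mem_forcingRelation_eq {q ν μ : Elem 𝕄} (hq : q.val ∈ F.P) (hν : F.Name ν)
    (hμ : F.Name μ) :
    (Elem.pair q (Elem.pair ν (Elem.pair μ ∅))).val ∈ F.forcingRelation (.eq 0 1) 2 ↔
      ∀ G, F.Generic G → q.val ∈ G → ν.eval G = μ.eval G := by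
  rw [Elem.pair_val, Elem.pair_val, Elem.pair_val]
  constructor
  · rintro ⟨p, -, σs, -, hforces, e⟩
    simp only [List.ofFn_succ, List.ofFn_zero, listEncode, ZFSet.pair_inj] at e
    obtain ⟨rfl, hσν, hσμ, -⟩ := e
    intro G hG hqG
    rw [Elem.eval, Elem.eval, hσν, hσμ]
    exact hforces G hG hqG
  · intro h
    exact ⟨q.val, hq, ![ν.val, μ.val],
      Fin.forall_fin_two.2 ⟨⟨ν.property, hν⟩, ⟨μ.property, hμ⟩⟩, h, by
        simp only [List.ofFn_succ, List.ofFn_zero, listEncode]; rfl⟩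

theorem IsProductForcing.mem_forcingRelation_eq_iff (hF : IsProductForcing F) {q x ν μ : Elem 𝕄}
    (hq : q.val ∈ F.P) (hqx : DeterminesCode f q x) (hν : F.Name ν) (hμ : F.Name μ) {S : Prop}
    (hS : ∀ G, F.Generic G → FirstRealsCode f G x → (ν.eval G = μ.eval G ↔ S)) :
    (Elem.pair q (Elem.pair ν (Elem.pair μ ∅))).val ∈ F.forcingRelation (.eq 0 1) 2 ↔ S := by
  have eval_eq_iff {G : Set ZFSet.{u}} (hG : F.Generic G) (hqG : q.val ∈ G) :=
    hS G hG (hqx.firstRealsCode hF hG hqG)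
  rw [ClassForcing.mem_forcingRelation_eq hq hν hμ]
  obtain ⟨G, hG, hqG⟩ := ClassForcing.exists_generic hq
  exact ⟨fun h => (eval_eq_iff hG hqG).1 (h G hG hqG), fun h G hG hqG => (eval_eq_iff hG hqG).2 h⟩

/-- If `x = ⟨ν, μ⟩`, then `C` contains `⟨q, ν, μ⟩` for no condition `q` that decides a code of `x`.
For `C` the forcing relation of equality this is the diagonal property used to refute its
definability. -/
def IsDiagonal (F : ClassForcing 𝕄) (f : Elem 𝕄) (C : Set ZFSet.{u}) (x : Elem 𝕄) : Prop :=
  ∀ q : Elem 𝕄, q.val ∈ F.P → ∀ ν μ, x = Elem.pair ν μ → DeterminesCode f q x →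
    (Elem.pair q (Elem.pair ν (Elem.pair μ ∅))).val ∉ C

theorem Definable.isDiagonal (F : ClassForcing 𝕄) (f : Elem 𝕄) {C : Set ZFSet.{u}}
    (hC : C ∈ 𝕄.Cls) : Definable 𝕄 fun v => IsDiagonal F f C (v 0) :=
  .all ((cls F.P F.P_cls 0).imp (.all (.all
    ((eq_terms (.var 3) ((DefinableTerm.var 1).pair (.var 0))).imp
      ((determinesCode f 2 3).imp (Definable.not (cls_term hC ((DefinableTerm.var 2).pair
        ((DefinableTerm.var 1).pair ((DefinableTerm.var 0).pair (.const ∅)))))))))))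

end Diagonal

theorem product_fails_forcing_theorem_general
    (𝕄 : GBModel)
    (hdef : ∀ X ∈ 𝕄.Cls, DefinableOver 𝕄.M X)
    (hctbl : AllSetsCountable 𝕄)
    (F : ClassForcing 𝕄)
    (hP : F.P = {s : ZFSet | QCond 𝕄 s})
    (hle : ∀ s' ∈ F.P, ∀ s ∈ F.P, (F.le s' s ↔ QLe s' s)) :
    F.forcingRelation (.eq 0 1) 2 ∉ 𝕄.Cls := by
  intro hC
  have hF : IsProductForcing F := ⟨hP, hle⟩
  obtain ⟨f, j, hf⟩ := hctbl.exists_isPairing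
  obtain ⟨ν, μ, hν, hμ, eval_eq_iff⟩ := exists_names_eval_eq_iff_mem hF hf hctbl
    (hdef _ ((Definable.isDiagonal F f hC).mem_cls fun _ => ∅))
  have forced_iff {q : Elem 𝕄} (hq : q.val ∈ F.P) (hqx : DeterminesCode f q (Elem.pair ν μ)) :=
    hF.mem_forcingRelation_eq_iff hq hqx hν hμ fun G hG hx =>
      (eval_eq_iff G hG _ hx).trans (exists_prop_of_true (Elem.property _))
  have not_isDiagonal :
      ¬ IsDiagonal F f (F.forcingRelation (.eq 0 1) 2) (Elem.pair ν μ) := fun hdiag => by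
    obtain ⟨q, hq, hqx⟩ := hF.exists_determinesCode hf hctbl (Elem.pair ν μ)
    exact hdiag q hq ν μ rfl hqx ((forced_iff hq hqx).2 hdiag)
  refine not_isDiagonal fun q hq ν' μ' e hqx hforced => ?_
  obtain ⟨rfl, rfl⟩ := Elem.pair_inj.1 e
  exact not_isDiagonal ((forced_iff hq hqx).1 hforced)

/-- Over a countable transitive model `M ⊨ ZF⁻` in which every set is countable
(with `𝒞` the definable classes), the finite support product `ℚ` of `ω` many copies of the
forcing with infinite partial functions `ω → 2` does not satisfy the forcing theorem
over `𝕄 = ⟨M, 𝒞⟩`. -/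
theorem product_fails_forcing_theorem
    (𝕄 : GBModel)
    (hdef : ∀ X : Set ZFSet, X ∈ 𝕄.Cls ↔ DefinableOver 𝕄.M X)
    (hctbl : AllSetsCountable 𝕄)
    (F : ClassForcing 𝕄)
    (hP : F.P = {s : ZFSet | QCond 𝕄 s})
    (hle : ∀ s' ∈ F.P, ∀ s ∈ F.P, (F.le s' s ↔ QLe s' s)) :
    ¬ SatisfiesForcingTheorem 𝕄 F := fun hft =>
  product_fails_forcing_theorem_general 𝕄 (fun X => (hdef X).1) hctbl F hP hle
    (hft (.eq 0 1) 2 ⟨zero_lt_two, one_lt_two⟩).1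

end CF
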